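/- Let 0<α<1. Then there exists a constant c_α, depending only on α (and on sup_n m_n), such that for every martingale f ∈ H_{1/(1+α)}(G_m) one has ‖ sup_{n∈ℕ} |σ_n^α f| / log^{1+α}(n+1) ‖_{1/(1+α)} ≤ c_α ‖f‖_{H_{1/(1+α)}}, where σ_n^α denotes the n-th (C,α) Cesàro mean of the Vilenkin-Fourier series. -/

import Mathlib

open MeasureTheory Filter Finset Asymptotics
open scoped ENNReal NNReal

noncomputable section

namespace Vilenkin

/-- The Vilenkin group `G_m`: the complete direct product of the cyclic groups `Z_{m_n}`. -/
abbrev G (m : ℕ → ℕ) := ∀ n, ZMod (m n)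

/-- The generalized number system `M_0 = 1`, `M_{n+1} = m_n M_n`. -/
def MM (m : ℕ → ℕ) : ℕ → ℕ
  | 0 => 1
  | n + 1 => m n * MM m n

/-- The generalized Rademacher functions `r_k(x) = exp(2 π i x_k / m_k)`. -/
def rade (m : ℕ → ℕ) (k : ℕ) (x : G m) : ℂ :=
  Complex.exp (2 * Real.pi * Complex.I * ((x k).val : ℂ) / (m k : ℂ))

/-- The Vilenkin system `ψ_n = ∏_k r_k^{n_k}`, where `n = ∑_k n_k M_k` is the expansion of `n`
in the generalized number system (the digits `n_k = (n / M_k) mod m_k` vanish for `k > n`). -/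
def psi (m : ℕ → ℕ) (n : ℕ) (x : G m) : ℂ :=
  ∏ k ∈ Finset.range (n + 1), rade m k x ^ (n / MM m k % m k)

/-- The Dirichlet kernels `D_n = ∑_{k=0}^{n-1} ψ_k`. -/
def D (m : ℕ → ℕ) (n : ℕ) (x : G m) : ℂ := ∑ k ∈ Finset.range n, psi m k x

/-- The Fejér kernels `K_n = (1/n) ∑_{k=1}^{n} D_k`. -/
def K (m : ℕ → ℕ) (n : ℕ) (x : G m) : ℂ := (n : ℂ)⁻¹ * ∑ k ∈ Finset.Icc 1 n, D m k x

/-- `Q_n = ∑_{k=0}^{n-1} q_k`. -/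
def Q (q : ℕ → ℝ) (n : ℕ) : ℝ := ∑ k ∈ Finset.range n, q k

/-- The Nörlund kernels `F_n = (1/Q_n) ∑_{k=1}^{n} q_{n-k} D_k`. -/
def F (m : ℕ → ℕ) (q : ℕ → ℝ) (n : ℕ) (x : G m) : ℂ :=
  ((Q q n : ℝ) : ℂ)⁻¹ * ∑ k ∈ Finset.Icc 1 n, (q (n - k) : ℂ) * D m k x

/-- The interval (cylinder) `I_n(x) = {y : y_j = x_j for all j < n}`. -/
def cyl (m : ℕ → ℕ) (n : ℕ) (x : G m) : Set (G m) := {y | ∀ j < n, y j = x j}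

/-- The element `s_k e_k` of `G_m` (value `s_k` in coordinate `k`, zero elsewhere). -/
def oneSpike (m : ℕ → ℕ) (k sk : ℕ) : G m := fun j => if j = k then (sk : ZMod (m j)) else 0

/-- The element `s_k e_k + s_l e_l` of `G_m` (for `k ≠ l`). -/
def twoSpike (m : ℕ → ℕ) (k sk l sl : ℕ) : G m :=
  fun j => if j = k then (sk : ZMod (m j)) else if j = l then (sl : ZMod (m j)) else 0

/-- The σ-algebra `𝔉_n` generated by the intervals `I_n(x)`, i.e. by the first `n`
coordinates. -/
def filt (m : ℕ → ℕ) (n : ℕ) : MeasurableSpace (G m) :=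
  MeasurableSpace.comap (fun x (i : Fin n) => x i.val) inferInstance

/-- `f = (f^{(n)})` is a martingale with respect to the filtration `(𝔉_n)` and the measure `μ`. -/
def IsMartingale (m : ℕ → ℕ) (μ : Measure (G m)) (f : ℕ → G m → ℂ) : Prop :=
  (∀ n, Integrable (f n) μ) ∧ (∀ n, Measurable[filt m n] (f n)) ∧
    ∀ n, ∀ s : Set (G m), MeasurableSet[filt m n] s →
      ∫ x in s, f (n + 1) x ∂μ = ∫ x in s, f n x ∂μ

/-- The `L_p`-quasinorm `(∫ g^p dμ)^{1/p}` of a nonnegative (extended-real-valued) function. -/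
def lpNormE (m : ℕ → ℕ) (μ : Measure (G m)) (p : ℝ) (g : G m → ℝ≥0∞) : ℝ≥0∞ :=
  (∫⁻ x, g x ^ p ∂μ) ^ (1 / p)

/-- The martingale Hardy space quasinorm `‖f‖_{H_p} = ‖sup_n |f^{(n)}|‖_p`. -/
def HpNorm (m : ℕ → ℕ) (μ : Measure (G m)) (p : ℝ) (f : ℕ → G m → ℂ) : ℝ≥0∞ :=
  lpNormE m μ p (fun x => ⨆ n, (‖f n x‖₊ : ℝ≥0∞))

/-- The Vilenkin-Fourier coefficients of a martingale:
`f̂(i) = lim_k ∫ f^{(k)} conj ψ_i dμ`. -/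
def mcoef (m : ℕ → ℕ) (μ : Measure (G m)) (f : ℕ → G m → ℂ) (i : ℕ) : ℂ :=
  limUnder atTop fun k => ∫ x, f k x * (starRingEnd ℂ) (psi m i x) ∂μ

/-- The partial sums `S_n f = ∑_{k=0}^{n-1} f̂(k) ψ_k` of the Vilenkin-Fourier series of a
martingale. -/
def mS (m : ℕ → ℕ) (μ : Measure (G m)) (f : ℕ → G m → ℂ) (n : ℕ) (x : G m) : ℂ :=
  ∑ k ∈ Finset.range n, mcoef m μ f k * psi m k x

/-- The Nörlund means `t_n f = (1/Q_n) ∑_{k=1}^{n} q_{n-k} S_k f` of a martingale. -/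
def mT (m : ℕ → ℕ) (q : ℕ → ℝ) (μ : Measure (G m)) (f : ℕ → G m → ℂ) (n : ℕ) (x : G m) : ℂ :=
  ((Q q n : ℝ) : ℂ)⁻¹ * ∑ k ∈ Finset.Icc 1 n, (q (n - k) : ℂ) * mS m μ f k x

/-- The Cesàro numbers `A_0^α = 0`, `A_n^α = (α+1)⋯(α+n)/n!`. -/
def AC (α : ℝ) (n : ℕ) : ℝ :=
  if n = 0 then 0 else (∏ j ∈ Finset.Icc 1 n, (α + (j : ℝ))) / (n.factorial : ℝ)

/-- The `(C,α)` (Cesàro) means `σ_n^α f = (1/A_n^α) ∑_{k=1}^{n} A_{n-k}^{α-1} S_k f` of a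
martingale. -/
def mCes (m : ℕ → ℕ) (α : ℝ) (μ : Measure (G m)) (f : ℕ → G m → ℂ) (n : ℕ) (x : G m) : ℂ :=
  ((AC α n : ℝ) : ℂ)⁻¹ * ∑ k ∈ Finset.Icc 1 n, ((AC (α - 1) (n - k) : ℝ) : ℂ) * mS m μ f k x

/-- The Fejér means `σ_n f = (1/n) ∑_{k=1}^{n} S_k f` of a martingale. -/
def mFej (m : ℕ → ℕ) (μ : Measure (G m)) (f : ℕ → G m → ℂ) (n : ℕ) (x : G m) : ℂ :=
  (n : ℂ)⁻¹ * ∑ k ∈ Finset.Icc 1 n, mS m μ f k x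

/-- The Vilenkin-Fourier coefficients of an integrable function. -/
def fcoef (m : ℕ → ℕ) (μ : Measure (G m)) (g : G m → ℂ) (i : ℕ) : ℂ :=
  ∫ x, g x * (starRingEnd ℂ) (psi m i x) ∂μ

/-- The partial sums of the Vilenkin-Fourier series of an integrable function. -/
def fS (m : ℕ → ℕ) (μ : Measure (G m)) (g : G m → ℂ) (n : ℕ) (x : G m) : ℂ :=
  ∑ k ∈ Finset.range n, fcoef m μ g k * psi m k x

/-- The Nörlund means of an integrable function. -/
def fT (m : ℕ → ℕ) (q : ℕ → ℝ) (μ : Measure (G m)) (g : G m → ℂ) (n : ℕ) (x : G m) : ℂ :=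
  ((Q q n : ℝ) : ℂ)⁻¹ * ∑ k ∈ Finset.Icc 1 n, (q (n - k) : ℂ) * fS m μ g k x

/-!
Put `p = 1 / (1 + α)`. The predictable majorant `Λ_n`, the maximum of `|f^{(j)}|`, `j ≤ n`, over
the siblings of a cylinder, is `𝔉_{n-1}`-measurable and, `m` being bounded, `∫ Λ^p ≤ B ∫ (f*)^p`.
Cutting the martingale at the levels `N` where the dyadic size of `Λ` jumps writes it as a sum of
atoms `a_N`: each is dominated by the new dyadic size `e_N` on the set of the jump, is orthogonal
to the `𝔉_N`-measurable functions for `N ≥ 1`, and `∑_N e_N^p ≲ Λ^p` since the sizes double at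
every jump.

If `n ≤ M_N`, the `n`-th Cesàro kernel is `𝔉_N`-measurable and `a_N` does not contribute to
`σ_n^α f`. If `n ≥ M_N`, then `N ≲ log n`, and the `p`-th power of the mass of the kernel on a
cylinder `I_N(y)`, divided by `log n`, is at most a constant times the function that is `1` on
`I_N(y)` plus `(N M_N)⁻¹ ∑_{l < k ≤ N} M_l^p M_k^{1-p}`, where the term `(l, k)` is restricted to
the points agreeing with `y` before `k` except at `l`. That function is independent of `n` and has
integral `O(1 / M_N)`, so the subadditivity of `t ↦ t^p` sums up the contributions of all
cylinders and all levels.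
-/

/-! ### The number system -/

section NumberSystem

variable {m : ℕ → ℕ}

lemma MM_succ (n : ℕ) : MM m (n + 1) = m n * MM m n := rfl

lemma MM_pos [∀ n, NeZero (m n)] (n : ℕ) : 0 < MM m n := by
  induction n with
  | zero => exact Nat.one_pos
  | succ n ih => exact Nat.mul_pos (NeZero.pos (m n)) ih

lemma MM_dvd {k l : ℕ} (h : k ≤ l) : MM m k ∣ MM m l := by
  induction l, h using Nat.le_induction with
  | base => exact dvd_rfl
  | succ l _ ih => exact ih.trans (Dvd.intro_left _ rfl)

lemma MM_mono [∀ n, NeZero (m n)] : Monotone (MM m) :=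
  fun _ l h => Nat.le_of_dvd (MM_pos l) (MM_dvd h)

lemma two_pow_mul_MM_le [∀ n, (m n).AtLeastTwo] {k l : ℕ} (h : k ≤ l) :
    2 ^ (l - k) * MM m k ≤ MM m l := by
  induction l, h using Nat.le_induction with
  | base => simp
  | succ l h ih =>
    rw [Nat.succ_sub h, pow_succ', mul_assoc, MM_succ]
    exact Nat.mul_le_mul Nat.AtLeastTwo.prop ih

lemma two_pow_le_MM [∀ n, (m n).AtLeastTwo] (n : ℕ) : 2 ^ n ≤ MM m n := by
  simpa [MM] using two_pow_mul_MM_le (m := m) n.zero_le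

lemma lt_MM [∀ n, (m n).AtLeastTwo] (n : ℕ) : n < MM m n :=
  Nat.lt_two_pow_self.trans_le (two_pow_le_MM n)

lemma digit_mul_add_of_lt [∀ n, NeZero (m n)] {k L : ℕ} (h : k < L) (v u : ℕ) :
    (MM m L * v + u) / MM m k % m k = u / MM m k % m k := by
  obtain ⟨c, hc⟩ : MM m (k + 1) ∣ MM m L := MM_dvd h
  rw [hc, MM_succ, show m k * MM m k * c * v + u = u + MM m k * (m k * (c * v)) by ring,
    Nat.add_mul_div_left _ _ (MM_pos k), Nat.add_mul_mod_self_left]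

lemma digit_mul_of_lt [∀ n, NeZero (m n)] {k L : ℕ} (h : k < L) (v : ℕ) :
    MM m L * v / MM m k % m k = 0 := by
  simpa using digit_mul_add_of_lt h v 0

lemma digit_mul_add_of_le [∀ n, NeZero (m n)] {k L : ℕ} (h : L ≤ k) (v : ℕ) {u : ℕ}
    (hu : u < MM m L) : (MM m L * v + u) / MM m k % m k = MM m L * v / MM m k % m k := by
  obtain ⟨c, hc⟩ : MM m L ∣ MM m k := MM_dvd h
  rw [hc, ← Nat.div_div_eq_div_mul, ← Nat.div_div_eq_div_mul, Nat.mul_add_div (MM_pos L),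
    Nat.div_eq_of_lt hu, Nat.add_zero, Nat.mul_div_cancel_left _ (MM_pos L)]

end NumberSystem

/-! ### Characters -/

section Characters

variable {m : ℕ → ℕ}

lemma rade_eq_stdAddChar [∀ n, NeZero (m n)] (k : ℕ) (x : G m) :
    rade m k x = ZMod.stdAddChar (x k) := by
  rw [ZMod.stdAddChar_apply, ZMod.toCircle_apply, rade]

lemma norm_rade [∀ n, NeZero (m n)] (k : ℕ) (x : G m) : ‖rade m k x‖ = 1 := by
  rw [rade_eq_stdAddChar, ZMod.stdAddChar_apply, Circle.norm_coe]

lemma rade_sub [∀ n, NeZero (m n)] (k : ℕ) (x t : G m) :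
    rade m k (x - t) = rade m k x * (starRingEnd ℂ) (rade m k t) := by
  simp only [rade_eq_stdAddChar, Pi.sub_apply, AddChar.map_sub_eq_div, div_eq_mul_inv,
    ZMod.stdAddChar_apply, ← Circle.coe_inv_eq_conj, Circle.coe_inv]

lemma sum_range_rade_pow [∀ n, NeZero (m n)] {k : ℕ} {x : G m} (h : x k ≠ 0) :
    ∑ c ∈ range (m k), rade m k x ^ c = 0 := by
  have rade_ne_one : rade m k x ≠ 1 := by
    rw [rade_eq_stdAddChar, ← AddChar.map_zero_eq_one (ZMod.stdAddChar (N := m k))]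
    exact ZMod.injective_stdAddChar.ne h
  have rade_pow : rade m k x ^ m k = 1 := by
    rw [rade_eq_stdAddChar, ← AddChar.map_nsmul_eq_pow]
    simp
  rw [geom_sum_eq rade_ne_one, rade_pow, sub_self, zero_div]

lemma norm_psi [∀ n, NeZero (m n)] (n : ℕ) (x : G m) : ‖psi m n x‖ = 1 := by
  simp [psi, norm_prod, norm_rade]

lemma psi_sub [∀ n, NeZero (m n)] (n : ℕ) (x t : G m) :
    psi m n (x - t) = psi m n x * (starRingEnd ℂ) (psi m n t) := by
  simp [psi, rade_sub, map_prod, mul_pow, prod_mul_distrib]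

lemma psi_eq_prod_range [∀ n, (m n).AtLeastTwo] {n J : ℕ} (h : n < MM m J) (x : G m) :
    psi m n x = ∏ k ∈ range J, rade m k x ^ (n / MM m k % m k) := by
  have prod_range_eq {J' L : ℕ} (hJ' : n < MM m J') (hL : J' ≤ L) :
      ∏ k ∈ range J', rade m k x ^ (n / MM m k % m k) =
        ∏ k ∈ range L, rade m k x ^ (n / MM m k % m k) := by
    refine prod_subset (range_mono hL) fun k _ hk => ?_
    have hk : J' ≤ k := by simpa using hk
    rw [Nat.div_eq_of_lt (hJ'.trans_le (MM_mono hk)), Nat.zero_mod, pow_zero]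
  rw [psi, prod_range_eq (n.lt_succ_self.trans (lt_MM _)) (le_max_left (n + 1) J),
    prod_range_eq h (le_max_right (n + 1) J)]

lemma psi_mul_add [∀ n, (m n).AtLeastTwo] {L u : ℕ} (v : ℕ) (hu : u < MM m L) (x : G m) :
    psi m (MM m L * v + u) x = psi m (MM m L * v) x * psi m u x := by
  have hlt := lt_MM (m := m) (MM m L * v + u)
  rw [psi_eq_prod_range hlt, psi_eq_prod_range ((Nat.le_add_right _ u).trans_lt hlt),
    psi_eq_prod_range ((Nat.le_add_left u _).trans_lt hlt), ← prod_mul_distrib]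
  refine prod_congr rfl fun k _ => ?_
  rw [← pow_add]
  rcases lt_or_ge k L with h | h
  · rw [digit_mul_add_of_lt h, digit_mul_of_lt h, Nat.zero_add]
  · rw [digit_mul_add_of_le h v hu, Nat.div_eq_of_lt (hu.trans_le (MM_mono h)), Nat.zero_mod,
      Nat.add_zero]

lemma psi_MM_mul [∀ n, (m n).AtLeastTwo] {l c : ℕ} (hc : c < m l) (x : G m) :
    psi m (MM m l * c) x = rade m l x ^ c := by
  have h : MM m l * c < MM m (l + 1) := by
    rw [MM_succ, mul_comm (m l)]
    exact Nat.mul_lt_mul_of_pos_left hc (MM_pos l)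
  rw [psi_eq_prod_range h, prod_range_succ, Nat.mul_div_cancel_left _ (MM_pos l),
    Nat.mod_eq_of_lt hc, prod_eq_one, one_mul]
  exact fun k hk => by rw [digit_mul_of_lt (mem_range.mp hk), pow_zero]

end Characters

/-! ### Dirichlet kernels -/

section DirichletKernel

variable {m : ℕ → ℕ} {x : G m}

/-- A sequence which repeats itself along blocks of length `M_L`, up to the factor
`ψ_{M_L v}(x)`. The characters have this property, and partial summation preserves it as soon as
some earlier coordinate of `x` is nonzero, which gives the cancellation in the Dirichlet and
Cesàro kernels. -/
def IsBlockPeriodic (m : ℕ → ℕ) (x : G m) (L : ℕ) (s : ℕ → ℂ) : Prop :=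
  ∀ v, ∀ u < MM m L, s (MM m L * v + u) = psi m (MM m L * v) x * s u

namespace IsBlockPeriodic

variable {s : ℕ → ℂ}

lemma norm_le [∀ n, NeZero (m n)] {L : ℕ} (hs : IsBlockPeriodic m x L s) {C : ℝ}
    (hC : ∀ u < MM m L, ‖s u‖ ≤ C) (n : ℕ) : ‖s n‖ ≤ C := by
  have hu : n % MM m L < MM m L := n.mod_lt (MM_pos L)
  rw [← Nat.div_add_mod n (MM m L), hs _ _ hu, norm_mul, norm_psi, one_mul]
  exact hC _ hu

lemma sum_range_mul_add {L u : ℕ} (hs : IsBlockPeriodic m x L s) (v : ℕ) (hu : u ≤ MM m L) :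
    ∑ i ∈ range (MM m L * v + u), s i =
      ∑ i ∈ range (MM m L * v), s i + psi m (MM m L * v) x * ∑ i ∈ range u, s i := by
  rw [sum_range_add, mul_sum]
  exact congrArg _ (sum_congr rfl fun i hi => hs v i ((mem_range.mp hi).trans_le hu))

lemma sum_range_MM_mul [∀ n, (m n).AtLeastTwo] {k c : ℕ} (hs : IsBlockPeriodic m x k s)
    (hc : c ≤ m k) :
    ∑ i ∈ range (MM m k * c), s i =
      (∑ i ∈ range (MM m k), s i) * ∑ d ∈ range c, rade m k x ^ d := by
  induction c with
  | zero => simp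
  | succ c ih =>
    rw [Nat.mul_succ, hs.sum_range_mul_add c le_rfl, ih (Nat.le_of_succ_le hc),
      psi_MM_mul hc, sum_range_succ]
    ring

lemma sum_range_of_dvd [∀ n, (m n).AtLeastTwo] {k n : ℕ} (hs : IsBlockPeriodic m x k s)
    (hs' : IsBlockPeriodic m x (k + 1) s) (hx : x k ≠ 0) (hn : MM m (k + 1) ∣ n) :
    ∑ i ∈ range n, s i = 0 := by
  obtain ⟨v, rfl⟩ := hn
  induction v with
  | zero => simp
  | succ v ih =>
    have sum_block : ∑ i ∈ range (MM m (k + 1)), s i = 0 := by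
      rw [MM_succ, mul_comm, hs.sum_range_MM_mul le_rfl, sum_range_rade_pow hx, mul_zero]
    rw [Nat.mul_succ, hs'.sum_range_mul_add v le_rfl, ih, sum_block, mul_zero, add_zero]

lemma sum_range {L : ℕ} (hs : IsBlockPeriodic m x L s)
    (hz : ∀ n, MM m L ∣ n → ∑ i ∈ range n, s i = 0) :
    IsBlockPeriodic m x L fun n => ∑ i ∈ range n, s i := by
  intro v u hu
  simp only [hs.sum_range_mul_add v hu.le, hz _ (Nat.dvd_mul_right _ v), zero_add]

end IsBlockPeriodic

lemma isBlockPeriodic_psi [∀ n, (m n).AtLeastTwo] (x : G m) (L : ℕ) :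
    IsBlockPeriodic m x L fun n => psi m n x :=
  fun v _ hu => psi_mul_add v hu x

lemma isBlockPeriodic_D [∀ n, (m n).AtLeastTwo] {l L : ℕ} (hl : x l ≠ 0) (hL : l < L) :
    IsBlockPeriodic m x L fun n => D m n x :=
  (isBlockPeriodic_psi x L).sum_range fun _ hn =>
    (isBlockPeriodic_psi x l).sum_range_of_dvd (isBlockPeriodic_psi x (l + 1)) hl
      ((MM_dvd hL).trans hn)

lemma isBlockPeriodic_sum_range_D [∀ n, (m n).AtLeastTwo] {l k : ℕ} (hlk : l < k)
    (hl : x l ≠ 0) (hk : x k ≠ 0) :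
    IsBlockPeriodic m x (k + 1) fun n => ∑ i ∈ range n, D m i x :=
  (isBlockPeriodic_D hl (hlk.trans k.lt_succ_self)).sum_range fun _ =>
    (isBlockPeriodic_D hl hlk).sum_range_of_dvd
      (isBlockPeriodic_D hl (hlk.trans k.lt_succ_self)) hk

lemma norm_D_le [∀ n, NeZero (m n)] (n : ℕ) (x : G m) : ‖D m n x‖ ≤ n :=
  (norm_sum_le _ _).trans (by simp [norm_psi])

lemma norm_D_le_MM [∀ n, (m n).AtLeastTwo] {l : ℕ} (hl : x l ≠ 0) (n : ℕ) :
    ‖D m n x‖ ≤ MM m (l + 1) :=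
  (isBlockPeriodic_D hl l.lt_succ_self).norm_le
    (fun u hu => (norm_D_le u x).trans (mod_cast hu.le)) n

lemma norm_sum_range_D_le [∀ n, (m n).AtLeastTwo] {l k : ℕ} (hlk : l < k) (hl : x l ≠ 0)
    (hk : x k ≠ 0) (n : ℕ) : ‖∑ i ∈ range n, D m i x‖ ≤ MM m (k + 1) * MM m (l + 1) := by
  refine (isBlockPeriodic_sum_range_D hlk hl hk).norm_le (fun u hu => ?_) n
  calc ‖∑ i ∈ range u, D m i x‖ ≤ ∑ _i ∈ range u, (MM m (l + 1) : ℝ) :=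
        norm_sum_le_of_le _ fun i _ => norm_D_le_MM hl i
    _ = u * MM m (l + 1) := by simp
    _ ≤ MM m (k + 1) * MM m (l + 1) := by gcongr

lemma norm_sum_range_D_sub_le [∀ n, (m n).AtLeastTwo] {l k : ℕ} (hlk : l < k) (hl : x l ≠ 0)
    (hk : x k ≠ 0) {t n : ℕ} (ht : t ≤ n + 1) :
    ‖∑ j ∈ range t, D m (n - j) x‖ ≤ 2 * (MM m (k + 1) * MM m (l + 1)) := by
  rw [range_eq_Ico, sum_Ico_reflect (fun j => D m j x) 0 ht, sum_Ico_eq_sub _ (by lia)]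
  refine (norm_sub_le _ _).trans ?_
  linarith [norm_sum_range_D_le hlk hl hk (n + 1 - 0), norm_sum_range_D_le hlk hl hk (n + 1 - t)]

end DirichletKernel

/-! ### Cesàro numbers -/

section CesaroNumbers

lemma AC_zero (α : ℝ) : AC α 0 = 0 := if_pos rfl

lemma AC_one (α : ℝ) : AC α 1 = α + 1 := by simp [AC]

lemma AC_succ (α : ℝ) {n : ℕ} (hn : n ≠ 0) :
    AC α (n + 1) = AC α n * ((α + (n + 1)) / (n + 1)) := by
  simp only [AC, hn, if_false, Nat.succ_ne_zero]
  rw [prod_Icc_succ_top (by lia), Nat.factorial_succ]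
  push_cast
  field_simp

lemma AC_nonneg {α : ℝ} (hα : -1 ≤ α) (n : ℕ) : 0 ≤ AC α n := by
  unfold AC
  split_ifs
  · exact le_rfl
  · refine div_nonneg (prod_nonneg fun j hj => ?_) n.factorial.cast_nonneg
    have : (1 : ℝ) ≤ j := mod_cast (mem_Icc.mp hj).1
    linarith

lemma AC_succ_le {α : ℝ} (hα : -1 ≤ α) (hα' : α ≤ 0) {n : ℕ} (hn : n ≠ 0) :
    AC α (n + 1) ≤ AC α n := by
  rw [AC_succ _ hn]
  refine mul_le_of_le_one_right (AC_nonneg hα n) ?_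
  rw [div_le_one (by positivity)]
  linarith

lemma AC_sub_one_mul (α : ℝ) (n : ℕ) : AC (α - 1) n * (α + n) = α * AC α n := by
  rcases eq_or_ne n 0 with rfl | hn
  · simp [AC_zero]
  · induction n, Nat.one_le_iff_ne_zero.mpr hn using Nat.le_induction with
    | base => simp [AC_one]
    | succ n hn ih =>
      rw [AC_succ _ (by lia), AC_succ _ (by lia)]
      push_cast
      linear_combination ((α + (n + 1)) / (n + 1)) * ih (by lia)

lemma AC_succ_eq_add (α : ℝ) {n : ℕ} (hn : n ≠ 0) :
    AC α (n + 1) = AC α n + AC (α - 1) (n + 1) := by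
  rw [AC_succ _ hn, AC_succ _ hn]
  field_simp
  linear_combination -AC_sub_one_mul α n

lemma sum_range_AC_sub_one_le {α : ℝ} (hα : 0 ≤ α) (n : ℕ) :
    ∑ j ∈ range n, AC (α - 1) j ≤ AC α n := by
  suffices ∑ j ∈ range (n + 1), AC (α - 1) j ≤ AC α n by
    rw [sum_range_succ] at this
    linarith [AC_nonneg (α := α - 1) (by linarith) n]
  induction n with
  | zero => simp [AC_zero]
  | succ n ih =>
    rw [sum_range_succ]
    rcases eq_or_ne n 0 with rfl | hn
    · simp [AC_zero, AC_one]
    · linarith [AC_succ_eq_add α hn]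

lemma mul_AC_sub_one_le {α : ℝ} (hα : 0 ≤ α) (hα' : α ≤ 1) (n : ℕ) :
    n * AC (α - 1) n ≤ AC α n := by
  nlinarith [AC_sub_one_mul α n, AC_nonneg (α := α - 1) (by linarith) n,
    AC_nonneg (α := α) (by linarith) n]

lemma rpow_le_AC {α : ℝ} (hα : 0 ≤ α) (hα' : α ≤ 1) {n : ℕ} (hn : n ≠ 0) :
    ((n : ℝ) + 1) ^ α ≤ AC α n := by
  induction n, Nat.one_le_iff_ne_zero.mpr hn using Nat.le_induction with
  | base =>
    have bernoulli := rpow_one_add_le_one_add_mul_self (s := 1) (by norm_num) hα hα'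
    rw [AC_one]
    push_cast
    linarith
  | succ n hn ih =>
    have bernoulli := rpow_one_add_le_one_add_mul_self (s := 1 / ((n : ℝ) + 1))
      (by linarith [show 0 ≤ 1 / ((n : ℝ) + 1) by positivity]) hα hα'
    calc ((n + 1 : ℕ) + 1 : ℝ) ^ α
        = ((n : ℝ) + 1) ^ α * (1 + 1 / ((n : ℝ) + 1)) ^ α := by
          rw [← Real.mul_rpow (by positivity) (by positivity)]
          congr 1
          push_cast
          field_simp
      _ ≤ AC α n * (1 + α * (1 / ((n : ℝ) + 1))) := by
          gcongr
          · exact AC_nonneg (by linarith) n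
          · exact ih (by lia)
      _ = AC α (n + 1) := by
          rw [AC_succ _ (by lia)]
          field_simp
          ring

lemma AC_le_two_mul_rpow {α : ℝ} (hα : 0 ≤ α) (hα' : α ≤ 1) {n : ℕ} (hn : n ≠ 0) :
    AC α n ≤ 2 * (n : ℝ) ^ α := by
  induction n, Nat.one_le_iff_ne_zero.mpr hn using Nat.le_induction with
  | base =>
    rw [AC_one, Nat.cast_one, Real.one_rpow]
    linarith
  | succ n hn ih =>
    have hle : 1 / ((n : ℝ) + 1) ≤ 1 := by
      rw [div_le_one (by positivity)]
      linarith [n.cast_nonneg (α := ℝ)]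
    have bernoulli := rpow_one_add_le_one_add_mul_self (s := -(1 / ((n : ℝ) + 1)))
      (by linarith) hα hα'
    have rpow_le : (n : ℝ) ^ α ≤ ((n + 1 : ℕ) : ℝ) ^ α * (1 - α / (n + 1)) :=
      calc (n : ℝ) ^ α = ((n + 1 : ℕ) : ℝ) ^ α * (1 + -(1 / ((n : ℝ) + 1))) ^ α := by
            rw [← Real.mul_rpow (by positivity) (by linarith)]
            congr 1
            push_cast
            field_simp
            ring
        _ ≤ ((n + 1 : ℕ) : ℝ) ^ α * (1 - α / (n + 1)) := by
            gcongr
            exact bernoulli.trans_eq (by ring)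
    calc AC α (n + 1) = AC α n * (1 + α / (n + 1)) := by
          rw [AC_succ _ (by lia)]
          field_simp
          ring
      _ ≤ 2 * (((n + 1 : ℕ) : ℝ) ^ α * (1 - α / (n + 1))) * (1 + α / (n + 1)) := by
          gcongr
          exact (ih (by lia)).trans (by linarith)
      _ = 2 * ((n + 1 : ℕ) : ℝ) ^ α * (1 - (α / (n + 1)) ^ 2) := by ring
      _ ≤ 2 * ((n + 1 : ℕ) : ℝ) ^ α :=
          mul_le_of_le_one_right (by positivity) (by linarith [sq_nonneg (α / ((n : ℝ) + 1))])

end CesaroNumbers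

/-! ### Cesàro kernels -/

section CesaroKernel

lemma norm_sum_range_smul_le_of_antitone {E : Type*} [NormedAddCommGroup E] [NormedSpace ℝ E]
    {q : ℕ → ℝ} (hq : Antitone q) (hq0 : ∀ n, 0 ≤ q n) {b : ℕ → E} {C : ℝ} {n : ℕ}
    (hb : ∀ t ≤ n, ‖∑ j ∈ range t, b j‖ ≤ C) :
    ‖∑ j ∈ range n, q j • b j‖ ≤ q 0 * C := by
  have norm_smul_le' {r : ℝ} (hr : 0 ≤ r) {t : ℕ} (ht : t ≤ n) :
      ‖r • ∑ j ∈ range t, b j‖ ≤ r * C := by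
    rw [norm_smul, Real.norm_of_nonneg hr]
    exact mul_le_mul_of_nonneg_left (hb t ht) hr
  rw [sum_range_by_parts]
  simp only [← neg_sub (q _) (q (_ + 1)), neg_smul, sum_neg_distrib, sub_neg_eq_add]
  calc _ ≤ q (n - 1) * C + ∑ i ∈ range (n - 1), (q i - q (i + 1)) * C := by
        refine (norm_add_le _ _).trans (add_le_add (norm_smul_le' (hq0 _) le_rfl) ?_)
        exact norm_sum_le_of_le _ fun i hi =>
          norm_smul_le' (sub_nonneg.mpr (hq i.le_succ)) (by have := mem_range.mp hi; lia)
    _ = q 0 * C := by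
        rw [← sum_mul, sum_range_sub']
        ring

variable {m : ℕ → ℕ} {α : ℝ} {x : G m}

/-- The kernel `K_n^α = (1/A_n^α) ∑_{k=1}^n A_{n-k}^{α-1} D_k` of the `(C,α)` means, so that
`σ_n^α f = f * K_n^α`. -/
def cesaroKernel (m : ℕ → ℕ) (α : ℝ) (n : ℕ) (x : G m) : ℂ :=
  ((AC α n : ℝ) : ℂ)⁻¹ * ∑ k ∈ Icc 1 n, ((AC (α - 1) (n - k) : ℝ) : ℂ) * D m k x

lemma cesaroKernel_eq_sum_range (n : ℕ) (x : G m) :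
    cesaroKernel m α n x = (AC α n)⁻¹ • ∑ j ∈ range n, AC (α - 1) j • D m (n - j) x := by
  simp only [cesaroKernel, Complex.real_smul, Complex.ofReal_inv]
  congr 1
  refine sum_nbij' (n - ·) (n - ·) ?_ ?_ ?_ ?_ ?_
  all_goals intro k hk; simp only [mem_Icc, mem_range] at hk ⊢
  any_goals lia
  rw [Nat.sub_sub_self hk.2]

lemma norm_sum_range_AC_smul_le {E : Type*} [NormedAddCommGroup E] [NormedSpace ℝ E]
    (hα : 0 ≤ α) {n : ℕ} {d : ℕ → E} {C : ℝ} (hC : 0 ≤ C) (hd : ∀ j < n, ‖d j‖ ≤ C) :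
    ‖∑ j ∈ range n, AC (α - 1) j • d j‖ ≤ C * AC α n := by
  have hAC (j : ℕ) : 0 ≤ AC (α - 1) j := AC_nonneg (by linarith) j
  calc _ ≤ ∑ j ∈ range n, AC (α - 1) j * C := norm_sum_le_of_le _ fun j hj => by
        rw [norm_smul, Real.norm_of_nonneg (hAC j)]
        exact mul_le_mul_of_nonneg_left (hd j (mem_range.mp hj)) (hAC j)
    _ = C * ∑ j ∈ range n, AC (α - 1) j := by rw [← sum_mul, mul_comm]
    _ ≤ C * AC α n := mul_le_mul_of_nonneg_left (sum_range_AC_sub_one_le hα n) hC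

lemma norm_cesaroKernel_le_of_norm_D_le (hα : 0 ≤ α) {n : ℕ} {C : ℝ} (hC : 0 ≤ C)
    (hD : ∀ k ≤ n, ‖D m k x‖ ≤ C) : ‖cesaroKernel m α n x‖ ≤ C := by
  have hAC : 0 ≤ AC α n := AC_nonneg (by linarith) n
  rw [cesaroKernel_eq_sum_range, norm_smul, norm_inv, Real.norm_of_nonneg hAC]
  refine inv_mul_le_of_le_mul₀ hAC hC ?_
  rw [mul_comm]
  exact norm_sum_range_AC_smul_le hα hC fun j _ => hD _ (n.sub_le j)

lemma norm_cesaroKernel_le [∀ n, NeZero (m n)] (hα : 0 ≤ α) (n : ℕ) (x : G m) :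
    ‖cesaroKernel m α n x‖ ≤ n :=
  norm_cesaroKernel_le_of_norm_D_le hα n.cast_nonneg fun k hk =>
    (norm_D_le k x).trans (mod_cast hk)

lemma norm_cesaroKernel_le_MM [∀ n, (m n).AtLeastTwo] (hα : 0 ≤ α) (n : ℕ) {l : ℕ}
    (hl : x l ≠ 0) : ‖cesaroKernel m α n x‖ ≤ MM m (l + 1) :=
  norm_cesaroKernel_le_of_norm_D_le hα (Nat.cast_nonneg _) fun k _ => norm_D_le_MM hl k

lemma norm_sum_range_AC_add_smul_D_le [∀ n, (m n).AtLeastTwo] (hα : 0 ≤ α) (hα' : α ≤ 1)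
    {l k : ℕ} (hlk : l < k) (hl : x l ≠ 0) (hk : x k ≠ 0) (n : ℕ) :
    ‖∑ j ∈ range n, AC (α - 1) (MM m k + j) • D m (n - j) x‖ ≤
      2 * m k * (MM m (l + 1) * AC α (MM m k)) := by
  have hMk : MM m k ≠ 0 := (MM_pos k).ne'
  calc _ ≤ AC (α - 1) (MM m k + 0) * (2 * (MM m (k + 1) * MM m (l + 1))) :=
        norm_sum_range_smul_le_of_antitone (q := fun j => AC (α - 1) (MM m k + j))
          (antitone_nat_of_succ_le fun j => AC_succ_le (by linarith) (by linarith) (by lia))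
          (fun j => AC_nonneg (by linarith) _)
          fun t ht => norm_sum_range_D_sub_le hlk hl hk (by lia)
    _ = 2 * m k * (MM m (l + 1) * (MM m k * AC (α - 1) (MM m k))) := by
        rw [MM_succ, Nat.add_zero]
        push_cast
        ring
    _ ≤ 2 * m k * (MM m (l + 1) * AC α (MM m k)) := by
        gcongr
        exact mul_AC_sub_one_le hα hα' _

-- The weights `A_j^{α-1}` are summed trivially over `j < M_k` and by parts over `j ≥ M_k`.
lemma norm_cesaroKernel_le_MM_mul_AC_div [∀ n, (m n).AtLeastTwo] (hα : 0 ≤ α) (hα' : α ≤ 1)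
    {l k n : ℕ} (hlk : l < k) (hl : x l ≠ 0) (hk : x k ≠ 0) (hn : MM m k ≤ n) :
    ‖cesaroKernel m α n x‖ ≤ (1 + 2 * m k) * MM m (l + 1) * (AC α (MM m k) / AC α n) := by
  obtain ⟨T, rfl⟩ := Nat.exists_eq_add_of_le hn
  have hAC : 0 ≤ AC α (MM m k + T) := AC_nonneg (by linarith) _
  have head_le : ‖∑ j ∈ range (MM m k), AC (α - 1) j • D m (MM m k + T - j) x‖ ≤
      MM m (l + 1) * AC α (MM m k) :=
    norm_sum_range_AC_smul_le hα (Nat.cast_nonneg _) fun j _ => norm_D_le_MM hl _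
  have tail_le := norm_sum_range_AC_add_smul_D_le hα hα' hlk hl hk T
  rw [cesaroKernel_eq_sum_range, norm_smul, norm_inv, Real.norm_of_nonneg hAC, sum_range_add]
  simp only [Nat.add_sub_add_left]
  calc _ ≤ (AC α (MM m k + T))⁻¹ * (MM m (l + 1) * AC α (MM m k) +
          2 * m k * (MM m (l + 1) * AC α (MM m k))) := by
        gcongr
        exact (norm_add_le _ _).trans (add_le_add head_le tail_le)
    _ = _ := by ring

end CesaroKernel

/-! ### Cylinders and functions of finitely many coordinates -/

section Cylinders

variable {m : ℕ → ℕ}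

lemma mem_cyl {n : ℕ} {x y : G m} : y ∈ cyl m n x ↔ ∀ j < n, y j = x j := Iff.rfl

lemma cyl_zero (x : G m) : cyl m 0 x = Set.univ := by
  ext; simp [mem_cyl]

lemma cyl_anti {k n : ℕ} (h : k ≤ n) (x : G m) : cyl m n x ⊆ cyl m k x :=
  fun _ hy j hj => hy j (hj.trans_le h)

lemma cyl_eq_preimage_singleton (n : ℕ) (x : G m) :
    cyl m n x = (fun y (i : Fin n) => y i.val) ⁻¹' {fun i : Fin n => x i.val} := by
  ext y
  simp only [mem_cyl, Set.mem_preimage, Set.mem_singleton_iff, funext_iff, Fin.forall_iff]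

lemma measurableSet_filt_cyl (n : ℕ) (x : G m) : MeasurableSet[filt m n] (cyl m n x) :=
  ⟨_, .singleton _, (cyl_eq_preimage_singleton n x).symm⟩

lemma measurableSet_cyl (n : ℕ) (x : G m) : MeasurableSet (cyl m n x) := by
  rw [cyl_eq_preimage_singleton]
  exact measurableSet_preimage (by fun_prop) (.singleton _)

lemma dependsOn_mem_cyl (n : ℕ) (y : G m) : DependsOn (· ∈ cyl m n y) (Set.Iio n) :=
  fun x z h => propext (forall₂_congr fun j hj => by rw [h j hj])

lemma dependsOn_update_Iio {β : Type*} {n : ℕ} {g : G m → β}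
    (hg : DependsOn g (Set.Iio (n + 1))) (s : ZMod (m n)) :
    DependsOn (fun x => g (Function.update x n s)) (Set.Iio n) := by
  intro x y h
  refine hg fun j hj => ?_
  rcases eq_or_ne j n with rfl | hjn
  · simp only [Function.update_self]
  · rw [Function.update_of_ne hjn, Function.update_of_ne hjn,
      h j (lt_of_le_of_ne (Nat.lt_succ_iff.mp hj) hjn)]

lemma eq_update_of_dependsOn_Iio {β : Type*} {n : ℕ} {g : G m → β} (hg : DependsOn g (Set.Iio n))
    (x : G m) (s : ZMod (m n)) : g (Function.update x n s) = g x :=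
  hg fun _ hj => Function.update_of_ne (Set.mem_Iio.mp hj).ne _ _

lemma dependsOn_sub {β : Type*} {s : Set ℕ} {g : G m → β} (hg : DependsOn g s) (x : G m) :
    DependsOn (fun t => g (x - t)) s :=
  fun t u h => hg fun j hj => by rw [Pi.sub_apply, Pi.sub_apply, h j hj]

lemma dependsOn_mul {β : Type*} [Mul β] {s : Set ℕ} {g h : G m → β} (hg : DependsOn g s)
    (hh : DependsOn h s) : DependsOn (fun x => g x * h x) s :=
  fun _ _ hxy => congrArg₂ _ (hg hxy) (hh hxy)

variable [∀ n, NeZero (m n)] {n : ℕ}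

lemma measurable_of_dependsOn {β : Type*} [MeasurableSpace β] {g : G m → β}
    (hg : DependsOn g (Set.Iio n)) : Measurable g := by
  have : Nonempty β := ⟨g 0⟩
  obtain ⟨h, rfl⟩ := dependsOn_iff_exists_comp.mp hg
  exact (measurable_of_finite h).comp (Set.measurable_restrict _)

lemma integrable_of_dependsOn {E : Type*} [NormedAddCommGroup E] {g : G m → E}
    (hg : DependsOn g (Set.Iio n)) (μ : Measure (G m)) [IsFiniteMeasure μ] : Integrable g μ := by
  obtain ⟨h, rfl⟩ := dependsOn_iff_exists_comp.mp hg
  exact Integrable.comp_measurable .of_finite (Set.measurable_restrict _)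

end Cylinders

section Representatives

variable {m : ℕ → ℕ}

/-- The point of the cylinder `I_n(x)` whose coordinates from `n` on vanish. -/
def trunc (n : ℕ) (x : G m) : G m := fun j => if j < n then x j else 0

lemma trunc_apply {n : ℕ} (x : G m) {j : ℕ} (h : j < n) : trunc n x j = x j := if_pos h

lemma dependsOn_trunc (n : ℕ) : DependsOn (trunc n : G m → G m) (Set.Iio n) := by
  intro x y h
  funext j
  unfold trunc
  split_ifs with hj
  · exact h j hj
  · rfl

lemma trunc_trunc (n : ℕ) (x : G m) : trunc n (trunc n x) = trunc n x :=
  dependsOn_trunc n fun _ hj => trunc_apply x hj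

lemma mem_cyl_trunc (n : ℕ) (x : G m) : x ∈ cyl m n (trunc n x) :=
  fun _ hj => (trunc_apply x hj).symm

lemma trunc_update_trunc (n : ℕ) (y : G m) (s : ZMod (m n)) :
    trunc (n + 1) (Function.update (trunc n y) n s) = Function.update (trunc n y) n s := by
  funext j
  rcases lt_trichotomy j n with hj | rfl | hj
  · rw [trunc_apply _ (by lia)]
  · rw [trunc_apply _ (by lia)]
  · rw [Function.update_of_ne hj.ne', trunc, trunc, if_neg (by lia), if_neg (by lia)]

lemma update_trunc_self (n : ℕ) (y : G m) :
    Function.update (trunc n y) n (y n) = trunc (n + 1) y := by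
  rw [← trunc_update_trunc]
  refine dependsOn_trunc (n + 1) fun j hj => ?_
  rcases eq_or_ne j n with rfl | hjn
  · rw [Function.update_self]
  · rw [Function.update_of_ne hjn, trunc_apply _ (lt_of_le_of_ne (Nat.lt_succ_iff.mp hj) hjn)]

variable [∀ n, NeZero (m n)]

lemma finite_range_trunc (n : ℕ) : (Set.range (trunc n : G m → G m)).Finite := by
  obtain ⟨h, hh⟩ := dependsOn_iff_exists_comp.mp (dependsOn_trunc (m := m) n)
  rw [hh]
  exact (Set.finite_range h).subset (Set.range_comp_subset_range _ _)

/-- One representative of each cylinder of level `n`: the points whose coordinates from `n` on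
vanish. -/
def cylReps (m : ℕ → ℕ) [∀ n, NeZero (m n)] (n : ℕ) : Finset (G m) :=
  (finite_range_trunc n).toFinset

lemma mem_cylReps {n : ℕ} {y : G m} : y ∈ cylReps m n ↔ trunc n y = y := by
  rw [cylReps, Set.Finite.mem_toFinset]
  exact ⟨fun ⟨x, hx⟩ => hx ▸ trunc_trunc n x, fun h => ⟨y, h⟩⟩

lemma trunc_mem_cylReps (n : ℕ) (x : G m) : trunc n x ∈ cylReps m n :=
  mem_cylReps.mpr (trunc_trunc n x)

lemma eq_of_mem_cylReps {n : ℕ} {y z : G m} (hy : y ∈ cylReps m n) (hz : z ∈ cylReps m n)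
    (h : ∀ j < n, y j = z j) : y = z := by
  rw [← mem_cylReps.mp hy, ← mem_cylReps.mp hz, dependsOn_trunc n h]

lemma pairwiseDisjoint_cyl (n : ℕ) : (cylReps m n : Set (G m)).PairwiseDisjoint (cyl m n) :=
  fun _ hy _ hz hyz => Set.disjoint_left.mpr fun _ hx hx' =>
    hyz (eq_of_mem_cylReps hy hz fun j hj => (hx j hj).symm.trans (hx' j hj))

lemma biUnion_cylReps_cyl (n : ℕ) : ⋃ y ∈ cylReps m n, cyl m n y = Set.univ :=
  Set.eq_univ_of_forall fun x =>
    Set.mem_biUnion (trunc_mem_cylReps n x) (mem_cyl_trunc n x)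

lemma sum_cylReps_succ {β : Type*} [AddCommMonoid β] (n : ℕ) (g : G m → β) :
    ∑ y ∈ cylReps m (n + 1), g y =
      ∑ y ∈ cylReps m n, ∑ s : ZMod (m n), g (Function.update y n s) := by
  rw [← sum_product']
  refine sum_nbij' (fun y => (trunc n y, y n)) (fun q => Function.update q.1 n q.2) ?_ ?_ ?_ ?_ ?_
  · exact fun y _ => mem_product.mpr ⟨trunc_mem_cylReps n y, mem_univ _⟩
  · intro q hq
    rw [mem_cylReps, ← mem_cylReps.mp (mem_product.mp hq).1]
    exact trunc_update_trunc n q.1 q.2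
  · exact fun y hy => (update_trunc_self n y).trans (mem_cylReps.mp hy)
  · intro q hq
    refine Prod.ext ?_ (Function.update_self ..)
    rw [eq_update_of_dependsOn_Iio (dependsOn_trunc n), mem_cylReps.mp (mem_product.mp hq).1]
  · exact fun y hy => congrArg g ((update_trunc_self n y).trans (mem_cylReps.mp hy)).symm

end Representatives

section Integration

variable {m : ℕ → ℕ} {E : Type*} [NormedAddCommGroup E] [NormedSpace ℝ E]

/-- The measure gives equal mass to all cylinders of a level, as the normalized Haar measure of
`G_m` does. -/
class IsUniform (μ : Measure (G m)) : Prop where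
  measure_cyl : ∀ n x, μ (cyl m n x) = (MM m n : ℝ≥0∞)⁻¹

instance (μ : Measure (G m)) [IsUniform μ] : IsProbabilityMeasure μ :=
  ⟨by rw [← cyl_zero 0, IsUniform.measure_cyl, MM, Nat.cast_one, inv_one]⟩

lemma measureReal_cyl (μ : Measure (G m)) [IsUniform μ] (n : ℕ) (x : G m) :
    μ.real (cyl m n x) = (MM m n : ℝ)⁻¹ := by
  rw [measureReal_def, IsUniform.measure_cyl, ENNReal.toReal_inv, ENNReal.toReal_natCast]

variable [∀ n, NeZero (m n)] {μ : Measure (G m)}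

lemma integral_eq_sum_setIntegral_cyl (n : ℕ) {g : G m → E} (hg : Integrable g μ) :
    ∫ x, g x ∂μ = ∑ y ∈ cylReps m n, ∫ x in cyl m n y, g x ∂μ := by
  rw [← integral_biUnion_finset _ (fun y _ => measurableSet_cyl n y) (pairwiseDisjoint_cyl n)
    fun y _ => hg.integrableOn, biUnion_cylReps_cyl, Measure.restrict_univ]

lemma integral_eq_sum_div_MM [IsUniform μ] {n : ℕ} {g : G m → ℝ} (hg : DependsOn g (Set.Iio n)) :
    ∫ x, g x ∂μ = (∑ y ∈ cylReps m n, g y) / MM m n := by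
  rw [integral_eq_sum_setIntegral_cyl n (integrable_of_dependsOn hg μ), sum_div]
  refine sum_congr rfl fun y _ => ?_
  rw [setIntegral_congr_fun (measurableSet_cyl n y) fun x hx => hg hx, setIntegral_const,
    measureReal_cyl, smul_eq_mul, inv_mul_eq_div]

lemma integral_sum_update [IsUniform μ] {n : ℕ} {g : G m → ℝ}
    (hg : DependsOn g (Set.Iio (n + 1))) :
    ∫ x, ∑ s : ZMod (m n), g (Function.update x n s) ∂μ = m n * ∫ x, g x ∂μ := by
  have hm : (m n : ℝ) ≠ 0 := NeZero.ne _
  rw [integral_eq_sum_div_MM hg, sum_cylReps_succ, integral_eq_sum_div_MM (n := n)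
    fun x y h => sum_congr rfl fun s _ => dependsOn_update_Iio hg s h, MM_succ, Nat.cast_mul,
    mul_div_assoc', mul_div_mul_left _ _ hm]

end Integration

/-! ### Martingales -/

namespace IsMartingale

variable {m : ℕ → ℕ} {μ : Measure (G m)} {f : ℕ → G m → ℂ}

lemma dependsOn (hf : IsMartingale m μ f) (n : ℕ) : DependsOn (f n) (Set.Iio n) :=
  fun _ _ h => (hf.2.1 n).factorsThrough (funext fun i : Fin n => h i i.isLt)

lemma integral_mul_succ_sub [∀ n, NeZero (m n)] [IsFiniteMeasure μ] (hf : IsMartingale m μ f)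
    {n : ℕ} {g : G m → ℂ} (hg : DependsOn g (Set.Iio n)) :
    ∫ x, g x * (f (n + 1) x - f n x) ∂μ = 0 := by
  have hsub := Set.Iio_subset_Iio n.le_succ
  have hd : DependsOn (fun x => g x * (f (n + 1) x - f n x)) (Set.Iio (n + 1)) := fun x y h =>
    congrArg₂ _ (hg.mono hsub h)
      (congrArg₂ _ (hf.dependsOn (n + 1) h) ((hf.dependsOn n).mono hsub h))
  rw [integral_eq_sum_setIntegral_cyl n (integrable_of_dependsOn hd μ)]
  refine sum_eq_zero fun y _ => ?_
  calc ∫ x in cyl m n y, g x * (f (n + 1) x - f n x) ∂μ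
      = ∫ x in cyl m n y, g y * (f (n + 1) x - f n x) ∂μ :=
        setIntegral_congr_fun (measurableSet_cyl n y) fun x hx => congrArg (· * _) (hg hx)
    _ = g y * (∫ x in cyl m n y, f (n + 1) x ∂μ - ∫ x in cyl m n y, f n x ∂μ) := by
        rw [integral_const_mul, integral_sub (hf.1 _).integrableOn (hf.1 _).integrableOn]
    _ = 0 := by rw [hf.2.2 n _ (measurableSet_filt_cyl n y), sub_self, mul_zero]

end IsMartingale

/-! ### Decomposing a sequence along the jumps of a monotone sequence -/

section DyadicFloor

/-- The largest power of two not exceeding `a > 0`, and `0` for `a = 0`. -/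
def dyadicFloor (a : ℝ) : ℝ := if a = 0 then 0 else 2 ^ Int.log 2 a

lemma dyadicFloor_zero : dyadicFloor 0 = 0 := if_pos rfl

lemma dyadicFloor_of_ne_zero {a : ℝ} (ha : a ≠ 0) : dyadicFloor a = 2 ^ Int.log 2 a := if_neg ha

lemma dyadicFloor_nonneg (a : ℝ) : 0 ≤ dyadicFloor a := by
  unfold dyadicFloor; split_ifs <;> positivity

lemma dyadicFloor_le_self {a : ℝ} (ha : 0 ≤ a) : dyadicFloor a ≤ a := by
  rcases ha.eq_or_lt with rfl | ha
  · exact dyadicFloor_zero.le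
  · rw [dyadicFloor_of_ne_zero ha.ne']
    exact_mod_cast Int.zpow_log_le_self (b := 2) one_lt_two ha

lemma le_two_mul_dyadicFloor (a : ℝ) : a ≤ 2 * dyadicFloor a := by
  rcases eq_or_ne a 0 with rfl | ha
  · rw [dyadicFloor_zero, mul_zero]
  · rw [dyadicFloor_of_ne_zero ha, ← zpow_one_add₀ two_ne_zero, add_comm]
    exact_mod_cast (Int.lt_zpow_succ_log_self (b := 2) one_lt_two a).le

lemma dyadicFloor_mono {a b : ℝ} (ha : 0 ≤ a) (hab : a ≤ b) : dyadicFloor a ≤ dyadicFloor b := by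
  rcases ha.eq_or_lt with rfl | ha
  · exact dyadicFloor_zero.trans_le (dyadicFloor_nonneg b)
  · rw [dyadicFloor_of_ne_zero ha.ne', dyadicFloor_of_ne_zero (ha.trans_le hab).ne']
    exact zpow_le_zpow_right₀ one_le_two (Int.log_mono_right ha hab)

lemma two_mul_dyadicFloor_le_of_lt {a b : ℝ} (h : dyadicFloor a < dyadicFloor b) :
    2 * dyadicFloor a ≤ dyadicFloor b := by
  rcases eq_or_ne a 0 with rfl | ha
  · rw [dyadicFloor_zero, mul_zero]
    exact dyadicFloor_nonneg b
  have hb : b ≠ 0 := by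
    rintro rfl
    exact (dyadicFloor_zero ▸ h).not_ge (dyadicFloor_nonneg a)
  rw [dyadicFloor_of_ne_zero ha, dyadicFloor_of_ne_zero hb] at h ⊢
  rw [← zpow_one_add₀ two_ne_zero, add_comm]
  exact zpow_le_zpow_right₀ one_le_two ((zpow_lt_zpow_iff_right₀ one_lt_two).mp h)

end DyadicFloor

section Jumps

variable {β E : Type*}

/-- The sequence `e` takes a new value at time `N`; the time `0` counts as a jump. -/
def IsJump (e : ℕ → β) (N : ℕ) : Prop := N = 0 ∨ e (N - 1) ≠ e N

lemma isJump_zero (e : ℕ → β) : IsJump e 0 := Or.inl rfl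

lemma isJump_succ {e : ℕ → β} {n : ℕ} : IsJump e (n + 1) ↔ e n ≠ e (n + 1) := by
  simp [IsJump]

lemma existsUnique_isJump [PartialOrder β] {e : ℕ → β} (he : Monotone e) (n : ℕ) :
    ∃! N, N ≤ n ∧ IsJump e N ∧ e n = e N := by
  refine existsUnique_of_exists_of_unique ?_ ?_
  · induction n with
    | zero => exact ⟨0, le_rfl, isJump_zero e, rfl⟩
    | succ n ih =>
      by_cases h : e n = e (n + 1)
      · obtain ⟨N, hN, hjump, hval⟩ := ih
        exact ⟨N, hN.trans n.le_succ, hjump, h ▸ hval⟩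
      · exact ⟨n + 1, le_rfl, isJump_succ.mpr h, rfl⟩
  · have not_lt_of_isJump : ∀ N N', IsJump e N' → e N = e N' → ¬ N < N' := by
      rintro N N' (rfl | hjump) hval hlt
      · exact Nat.not_lt_zero N hlt
      · exact hjump ((he (Nat.sub_le N' 1)).antisymm (hval ▸ he (Nat.le_sub_one_of_lt hlt)))
    rintro N N' ⟨-, hN, hval⟩ ⟨-, hN', hval'⟩
    exact le_antisymm (not_lt.mp (not_lt_of_isJump N' N hN (hval'.symm.trans hval)))
      (not_lt.mp (not_lt_of_isJump N N' hN' (hval.symm.trans hval')))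

/-- The value `e N` if `e` jumps at time `N`, and `0` otherwise. -/
def jumpSize [Zero β] (e : ℕ → β) : ℕ → β :=
  open scoped Classical in fun N => if IsJump e N then e N else 0

lemma jumpSize_of_isJump [Zero β] {e : ℕ → β} {N : ℕ} (h : IsJump e N) : jumpSize e N = e N :=
  if_pos h

lemma jumpSize_of_not_isJump [Zero β] {e : ℕ → β} {N : ℕ} (h : ¬ IsJump e N) :
    jumpSize e N = 0 :=
  if_neg h

lemma jumpSize_nonneg {e : ℕ → ℝ} (he : 0 ≤ e) (N : ℕ) : 0 ≤ jumpSize e N := by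
  unfold jumpSize
  split_ifs
  · exact he N
  · exact le_rfl

lemma sum_jumpSize_rpow_le {e : ℕ → ℝ} (he0 : 0 ≤ e)
    (hjump : ∀ n, e n ≠ e (n + 1) → 2 * e n ≤ e (n + 1)) {p : ℝ} (hp : 0 < p) (n : ℕ) :
    ∑ N ∈ range (n + 1), jumpSize e N ^ p ≤ (1 - 2 ^ (-p))⁻¹ * e n ^ p := by
  have hq : (2 : ℝ) ^ (-p) < 1 := Real.rpow_lt_one_of_one_lt_of_neg one_lt_two (neg_neg_of_pos hp)
  set q : ℝ := 2 ^ (-p)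
  have hgeom : (1 - q)⁻¹ = (1 - q)⁻¹ * q + 1 := by
    have := (sub_pos.mpr hq).ne'
    field_simp
    ring
  have hq0 : 0 < q := by positivity
  have : 0 < (1 - q)⁻¹ := inv_pos.mpr (sub_pos.mpr hq)
  induction n with
  | zero =>
    rw [sum_range_one, jumpSize_of_isJump (isJump_zero e)]
    exact le_mul_of_one_le_left (Real.rpow_nonneg (he0 0) p) (by nlinarith)
  | succ n ih =>
    rw [sum_range_succ]
    by_cases h : e n = e (n + 1)
    · rw [jumpSize_of_not_isJump (by rwa [isJump_succ, not_not]), Real.zero_rpow hp.ne', add_zero,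
        ← h]
      exact ih
    · have hdouble : e n ^ p ≤ q * e (n + 1) ^ p :=
        calc e n ^ p ≤ (2⁻¹ * e (n + 1)) ^ p :=
              Real.rpow_le_rpow (he0 n) (by linarith [hjump n h]) hp.le
          _ = q * e (n + 1) ^ p := by
              rw [Real.mul_rpow (by norm_num) (he0 _), Real.inv_rpow zero_le_two,
                ← Real.rpow_neg zero_le_two]
      rw [jumpSize_of_isJump (isJump_succ.mpr h)]
      calc _ ≤ (1 - q)⁻¹ * (q * e (n + 1) ^ p) + e (n + 1) ^ p := by
            gcongr
            exact ih.trans (by gcongr)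
        _ = ((1 - q)⁻¹ * q + 1) * e (n + 1) ^ p := by ring
        _ = (1 - q)⁻¹ * e (n + 1) ^ p := by rw [← hgeom]

variable [AddCommGroup E]

/-- The part of `f K` contributed by the increments of `f` made while `e` has the value to which it
jumps at time `N`; the part of the jump at time `0` also contains `f 0`. -/
def plateauPart (e : ℕ → β) (f : ℕ → E) (K N : ℕ) : E :=
  open scoped Classical in
  if IsJump e N then
    (if N = 0 then f 0 else 0) + ∑ n ∈ Ico N K with e n = e N, (f (n + 1) - f n)
  else 0

lemma plateauPart_self (e : ℕ → β) (f : ℕ → E) {N : ℕ} (hN : N ≠ 0) :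
    plateauPart e f N N = 0 := by
  simp [plateauPart, hN]

open scoped Classical in
lemma plateauPart_succ (e : ℕ → β) (f : ℕ → E) {K N : ℕ} (hN : N ≤ K) :
    plateauPart e f (K + 1) N =
      plateauPart e f K N + if IsJump e N ∧ e K = e N then f (K + 1) - f K else 0 := by
  unfold plateauPart
  rw [sum_filter, sum_filter, sum_Ico_succ_top hN]
  split_ifs <;> simp_all [add_assoc]

lemma plateauPart_congr {e e' : ℕ → β} {f f' : ℕ → E} {K N : ℕ} (hN : N < K)
    (he : ∀ n < K, e n = e' n) (hf : ∀ n ≤ K, f n = f' n) :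
    plateauPart e f K N = plateauPart e' f' K N := by
  classical
  have hsum : ∑ n ∈ Ico N K with e n = e N, (f (n + 1) - f n) =
      ∑ n ∈ Ico N K with e' n = e' N, (f' (n + 1) - f' n) := by
    rw [sum_filter, sum_filter]
    refine sum_congr rfl fun n hn => ?_
    have hn := (mem_Ico.mp hn).2
    rw [he n hn, he N hN, hf n hn.le, hf (n + 1) hn]
  unfold plateauPart IsJump
  rw [hsum, hf 0 K.zero_le, he N hN, he (N - 1) (by lia)]

lemma sum_plateauPart [PartialOrder β] {e : ℕ → β} (he : Monotone e) (f : ℕ → E) {K : ℕ}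
    (hK : K ≠ 0) : ∑ N ∈ range K, plateauPart e f K N = f K := by
  classical
  have sum_indicator (n : ℕ) (d : E) :
      ∑ N ∈ range (n + 1), (if IsJump e N ∧ e n = e N then d else 0) = d := by
    obtain ⟨N, ⟨hN, hval⟩, huniq⟩ := existsUnique_isJump he n
    rw [sum_eq_single_of_mem N (mem_range_succ_iff.mpr hN), if_pos hval]
    exact fun N' hN' hne => if_neg fun h => hne (huniq N' ⟨mem_range_succ_iff.mp hN', h⟩)
  induction K, Nat.one_le_iff_ne_zero.mpr hK using Nat.le_induction with
  | base =>
    have hzero : plateauPart e f 0 0 = f 0 := by simp [plateauPart, isJump_zero]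
    rw [sum_range_one, plateauPart_succ e f le_rfl, if_pos ⟨isJump_zero e, rfl⟩, hzero,
      add_sub_cancel]
  | succ K hK1 ih =>
    rw [sum_congr rfl fun N hN => plateauPart_succ e f (mem_range_succ_iff.mp hN),
      sum_add_distrib, sum_indicator, sum_range_succ,
      plateauPart_self e f (Nat.one_le_iff_ne_zero.mp hK1), ih (by lia), add_zero,
      add_sub_cancel]

-- Along a monotone sequence a plateau is an interval of times, so the increments telescope.
lemma exists_sum_plateau_eq_sub [PartialOrder β] [DecidableEq β] {e : ℕ → β} (he : Monotone e)
    (f : ℕ → E) (N K : ℕ) :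
    ∃ τ, (τ = N ∨ ∃ k, τ = k + 1 ∧ e k = e N) ∧
      ∑ n ∈ Ico N K with e n = e N, (f (n + 1) - f n) = f τ - f N := by
  induction K with
  | zero => exact ⟨N, .inl rfl, by simp⟩
  | succ K ih =>
    rcases lt_or_ge K N with hKN | hNK
    · exact ⟨N, .inl rfl, by simp [Ico_eq_empty_of_le (Nat.succ_le_of_lt hKN)]⟩
    by_cases hK : e K = e N
    · refine ⟨K + 1, .inr ⟨K, rfl, hK⟩, ?_⟩
      rw [filter_true_of_mem, sum_Ico_sub f (hNK.trans K.le_succ)]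
      intro n hn
      rw [mem_Ico] at hn
      exact (hK ▸ he (Nat.lt_succ_iff.mp hn.2)).antisymm (he hn.1)
    · rwa [sum_filter, sum_Ico_succ_top hNK, if_neg hK, add_zero, ← sum_filter]

lemma norm_plateauPart_le {E : Type*} [SeminormedAddCommGroup E] {e : ℕ → ℝ} (he : Monotone e)
    {f : ℕ → E} {C : ℝ} (hf : ∀ n, ‖f n‖ ≤ C * e n) (hf_succ : ∀ n, ‖f (n + 1)‖ ≤ C * e n)
    (K N : ℕ) : ‖plateauPart e f K N‖ ≤ 2 * C * jumpSize e N := by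
  classical
  by_cases hN : IsJump e N
  · obtain ⟨τ, hτ, hsum⟩ := exists_sum_plateau_eq_sub he f N K
    have hfτ : ‖f τ‖ ≤ C * e N := by
      rcases hτ with rfl | ⟨k, rfl, hk⟩
      · exact hf τ
      · exact hk ▸ hf_succ k
    rw [jumpSize_of_isJump hN, plateauPart, if_pos hN, hsum]
    split_ifs with h0
    · rw [← congrArg f h0, add_sub_cancel]
      linarith [norm_nonneg (f τ)]
    · rw [zero_add]
      linarith [norm_sub_le (f τ) (f N), hf N]
  · rw [jumpSize_of_not_isJump hN, plateauPart, if_neg hN, norm_zero, mul_zero]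

end Jumps

/-! ### The predictable majorant and the atoms of a martingale -/

section PredictableMajorant

variable {m : ℕ → ℕ} {E : Type*} [NormedAddCommGroup E] {f : ℕ → G m → E}

/-- The running maximal function `max_{k ≤ n} |f^{(k)}|`. -/
def runningMax (f : ℕ → G m → E) (n : ℕ) (x : G m) : ℝ := partialSups (fun k => ‖f k x‖) n

/-- The maximum of `|f^{(n)}|` over the cylinder `I_{n-1}(x)` (over `G_m` itself when `n = 0`), for
`f^{(n)}` depending on the first `n` coordinates. -/
def fiberSup (f : ℕ → G m → E) : ℕ → G m → ℝ
  | 0, x => ‖f 0 x‖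
  | n + 1, x => ⨆ s : ZMod (m n), ‖f (n + 1) (Function.update x n s)‖

/-- A majorant of the running maximal function that is predictable, i.e. already determined by one
coordinate less. -/
def predictableMax (f : ℕ → G m → E) (n : ℕ) (x : G m) : ℝ :=
  partialSups (fun k => fiberSup f k x) n

lemma dependsOn_partialSups {g : ℕ → G m → ℝ} {s : Set ℕ} {n : ℕ}
    (hg : ∀ k ≤ n, DependsOn (g k) s) : DependsOn (fun x => partialSups (fun k => g k x) n) s := by
  intro x y h
  simp only [partialSups_apply]
  exact sup'_congr _ rfl fun k hk => hg k (mem_Iic.mp hk) h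

lemma dependsOn_runningMax (hf : ∀ n, DependsOn (f n) (Set.Iio n)) (n : ℕ) :
    DependsOn (runningMax f n) (Set.Iio n) :=
  dependsOn_partialSups fun k hk _ _ h =>
    congrArg norm ((hf k).mono (Set.Iio_subset_Iio hk) h)

lemma dependsOn_fiberSup (hf : ∀ n, DependsOn (f n) (Set.Iio n)) (n : ℕ) :
    DependsOn (fiberSup f n) (Set.Iio (n - 1)) := by
  cases n with
  | zero => exact fun x y h => congrArg norm (hf 0 h)
  | succ n =>
    exact fun x y h => iSup_congr fun s => congrArg norm (dependsOn_update_Iio (hf (n + 1)) s h)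

lemma dependsOn_predictableMax (hf : ∀ n, DependsOn (f n) (Set.Iio n)) (n : ℕ) :
    DependsOn (predictableMax f n) (Set.Iio (n - 1)) :=
  dependsOn_partialSups fun k hk =>
    (dependsOn_fiberSup hf k).mono (Set.Iio_subset_Iio (Nat.sub_le_sub_right hk 1))

lemma runningMax_succ (f : ℕ → G m → E) (n : ℕ) (x : G m) :
    runningMax f (n + 1) x = max (runningMax f n x) ‖f (n + 1) x‖ :=
  partialSups_add_one _ n

lemma runningMax_nonneg (f : ℕ → G m → E) (n : ℕ) (x : G m) : 0 ≤ runningMax f n x :=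
  (norm_nonneg (f n x)).trans (le_partialSups (fun k => ‖f k x‖) n)

lemma runningMax_le_runningMax_succ_update (hf : ∀ n, DependsOn (f n) (Set.Iio n)) (n : ℕ)
    (x : G m) (s : ZMod (m n)) :
    runningMax f n x ≤ runningMax f (n + 1) (Function.update x n s) := by
  rw [← eq_update_of_dependsOn_Iio (dependsOn_runningMax hf n) x s, runningMax_succ]
  exact le_max_left _ _

lemma predictableMax_succ (f : ℕ → G m → E) (n : ℕ) (x : G m) :
    predictableMax f (n + 1) x = max (predictableMax f n x) (fiberSup f (n + 1) x) :=
  partialSups_add_one _ n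

lemma predictableMax_mono (f : ℕ → G m → E) (x : G m) : Monotone fun n => predictableMax f n x :=
  (partialSups fun k => fiberSup f k x).monotone

variable [∀ n, NeZero (m n)]

lemma norm_le_fiberSup (f : ℕ → G m → E) (n : ℕ) (x : G m) : ‖f n x‖ ≤ fiberSup f n x := by
  cases n with
  | zero => exact le_rfl
  | succ n =>
    calc ‖f (n + 1) x‖ = ‖f (n + 1) (Function.update x n (x n))‖ := by
          rw [Function.update_eq_self]
      _ ≤ fiberSup f (n + 1) x :=
          le_ciSup (f := fun s : ZMod (m n) => ‖f (n + 1) (Function.update x n s)‖)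
            (Set.finite_range _).bddAbove (x n)

lemma runningMax_le_predictableMax (f : ℕ → G m → E) (n : ℕ) (x : G m) :
    runningMax f n x ≤ predictableMax f n x :=
  partialSups_mono (fun k => norm_le_fiberSup f k x) n

lemma norm_le_predictableMax (f : ℕ → G m → E) (n : ℕ) (x : G m) :
    ‖f n x‖ ≤ predictableMax f n x :=
  (norm_le_fiberSup f n x).trans (le_partialSups (fun k => fiberSup f k x) n)

lemma predictableMax_nonneg (f : ℕ → G m → E) (n : ℕ) (x : G m) : 0 ≤ predictableMax f n x :=
  (norm_nonneg _).trans (norm_le_predictableMax f n x)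

lemma exists_fiberSup_succ_le_runningMax (f : ℕ → G m → E) (n : ℕ) (x : G m) :
    ∃ s : ZMod (m n), fiberSup f (n + 1) x ≤ runningMax f (n + 1) (Function.update x n s) := by
  obtain ⟨s, hs⟩ := exists_eq_ciSup_of_finite
    (f := fun s : ZMod (m n) => ‖f (n + 1) (Function.update x n s)‖)
  refine ⟨s, ?_⟩
  rw [fiberSup, ← hs, runningMax_succ]
  exact le_max_right _ _

-- If the majorant increases at this step, its new value is attained by the running maximum on one
-- of the `m n` fibres, and the old value pays for the comparison on that fibre.
lemma predictableMax_succ_rpow_add_le (hf : ∀ n, DependsOn (f n) (Set.Iio n)) {p : ℝ}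
    (hp : 0 ≤ p) (n : ℕ) (x : G m) :
    predictableMax f (n + 1) x ^ p + m n * runningMax f n x ^ p ≤
      predictableMax f n x ^ p +
        ∑ s : ZMod (m n), runningMax f (n + 1) (Function.update x n s) ^ p := by
  have hfiber (s : ZMod (m n)) :
      runningMax f n x ^ p ≤ runningMax f (n + 1) (Function.update x n s) ^ p :=
    Real.rpow_le_rpow (runningMax_nonneg f n x)
      (runningMax_le_runningMax_succ_update hf n x s) hp
  have hcard : m n * runningMax f n x ^ p = ∑ _s : ZMod (m n), runningMax f n x ^ p := by
    rw [sum_const, card_univ, ZMod.card, nsmul_eq_mul]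
  rw [predictableMax_succ, hcard]
  rcases le_total (fiberSup f (n + 1) x) (predictableMax f n x) with h | h
  · rw [max_eq_left h]
    exact add_le_add le_rfl (sum_le_sum fun s _ => hfiber s)
  · obtain ⟨s, hs⟩ := exists_fiberSup_succ_le_runningMax f n x
    have hnew : fiberSup f (n + 1) x ^ p ≤ runningMax f (n + 1) (Function.update x n s) ^ p :=
      Real.rpow_le_rpow ((predictableMax_nonneg f n x).trans h) hs hp
    have hold : runningMax f n x ^ p ≤ predictableMax f n x ^ p :=
      Real.rpow_le_rpow (runningMax_nonneg f n x) (runningMax_le_predictableMax f n x) hp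
    have hrest := sum_le_sum fun t (_ : t ∈ univ.erase s) => hfiber t
    rw [max_eq_right h, ← add_sum_erase univ _ (mem_univ s),
      ← add_sum_erase univ (fun t => runningMax f (n + 1) (Function.update x n t) ^ p)
        (mem_univ s)]
    linarith

variable {μ : Measure (G m)} [IsUniform μ]

lemma integral_runningMax_rpow_le_succ (hf : ∀ n, DependsOn (f n) (Set.Iio n)) {p : ℝ}
    (hp : 0 ≤ p) (n : ℕ) :
    ∫ x, runningMax f n x ^ p ∂μ ≤ ∫ x, runningMax f (n + 1) x ^ p ∂μ := by
  have hint (n : ℕ) : Integrable (fun x => runningMax f n x ^ p) μ :=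
    integrable_of_dependsOn (fun x y h => congrArg (· ^ p) (dependsOn_runningMax hf n h)) μ
  refine integral_mono (hint n) (hint (n + 1)) fun x => ?_
  exact Real.rpow_le_rpow (runningMax_nonneg f n x)
    ((partialSups fun k => ‖f k x‖).monotone n.le_succ) hp

lemma integral_predictableMax_rpow_le (hf : ∀ n, DependsOn (f n) (Set.Iio n)) {B : ℕ}
    (hB : ∀ n, m n ≤ B) {p : ℝ} (hp : 0 ≤ p) (n : ℕ) :
    ∫ x, predictableMax f n x ^ p ∂μ ≤ B * ∫ x, runningMax f n x ^ p ∂μ := by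
  have hdepF (n : ℕ) : DependsOn (fun x => runningMax f n x ^ p) (Set.Iio n) :=
    fun x y h => congrArg (· ^ p) (dependsOn_runningMax hf n h)
  have hintF (n : ℕ) := integrable_of_dependsOn (hdepF n) μ
  have hintL (n : ℕ) : Integrable (fun x => predictableMax f n x ^ p) μ :=
    integrable_of_dependsOn (fun x y h => congrArg (· ^ p) (dependsOn_predictableMax hf n h)) μ
  induction n with
  | zero =>
    have hB1 : (1 : ℝ) ≤ B := by exact_mod_cast (NeZero.one_le (n := m 0)).trans (hB 0)
    exact le_mul_of_one_le_left
      (integral_nonneg fun x => Real.rpow_nonneg (runningMax_nonneg f 0 x) p) hB1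
  | succ n ih =>
    have hintS : Integrable
        (fun x => ∑ s : ZMod (m n), runningMax f (n + 1) (Function.update x n s) ^ p) μ :=
      integrable_of_dependsOn (n := n) (fun x y h => sum_congr rfl fun s _ =>
        dependsOn_update_Iio (hdepF (n + 1)) s h) μ
    have hstep := integral_mono ((hintL (n + 1)).add ((hintF n).const_mul (m n : ℝ)))
      ((hintL n).add hintS) (predictableMax_succ_rpow_add_le hf hp n)
    simp only [Pi.add_apply] at hstep
    rw [integral_add (hintL _) ((hintF n).const_mul _), integral_add (hintL n) hintS,
      integral_const_mul, integral_sum_update (hdepF (n + 1))] at hstep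
    have hmB : (m n : ℝ) ≤ B := by exact_mod_cast hB n
    have hmono := integral_runningMax_rpow_le_succ (μ := μ) hf hp n
    linarith [mul_le_mul_of_nonneg_right hmB (sub_nonneg.mpr hmono)]

end PredictableMajorant

section Atoms

variable {m : ℕ → ℕ} {E : Type*} [NormedAddCommGroup E]

/-- The dyadic size of the predictable majorant; at level `n` it is determined by the first `n`
coordinates. -/
def dyadicSize (f : ℕ → G m → E) (n : ℕ) (x : G m) : ℝ := dyadicFloor (predictableMax f (n + 1) x)

/-- The part of `f^{(K)}` accumulated while the majorant has the dyadic size it reaches at level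
`N`. -/
def atom (f : ℕ → G m → E) (K N : ℕ) (x : G m) : E :=
  plateauPart (fun n => dyadicSize f n x) (fun n => f n x) K N

/-- The dyadic size of the majorant on the set where this size changes at level `N`. -/
def atomSize (f : ℕ → G m → E) (N : ℕ) (x : G m) : ℝ := jumpSize (fun n => dyadicSize f n x) N

variable {f : ℕ → G m → E}

lemma atomSize_nonneg (f : ℕ → G m → E) (N : ℕ) (x : G m) : 0 ≤ atomSize f N x :=
  jumpSize_nonneg (fun _ => dyadicFloor_nonneg _) N

lemma dependsOn_dyadicSize (hf : ∀ n, DependsOn (f n) (Set.Iio n)) {k n : ℕ} (hkn : k ≤ n) :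
    DependsOn (dyadicSize f k) (Set.Iio n) := fun _ _ h =>
  congrArg dyadicFloor ((dependsOn_predictableMax hf (k + 1)).mono (Set.Iio_subset_Iio hkn) h)

lemma dependsOn_isJump_dyadicSize (hf : ∀ n, DependsOn (f n) (Set.Iio n)) (N : ℕ) :
    DependsOn (fun x => IsJump (fun n => dyadicSize f n x) N) (Set.Iio N) := by
  intro x y h
  simp only [IsJump]
  rw [dependsOn_dyadicSize hf le_rfl h, dependsOn_dyadicSize hf (Nat.sub_le N 1) h]

lemma dependsOn_atomSize (hf : ∀ n, DependsOn (f n) (Set.Iio n)) (N : ℕ) :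
    DependsOn (atomSize f N) (Set.Iio N) := by
  intro x y h
  have hjump : IsJump (fun n => dyadicSize f n x) N = IsJump (fun n => dyadicSize f n y) N :=
    dependsOn_isJump_dyadicSize hf N h
  classical
  exact ite_congr hjump (fun _ => dependsOn_dyadicSize hf le_rfl h) fun _ => rfl

lemma dependsOn_atom (hf : ∀ n, DependsOn (f n) (Set.Iio n)) {K N : ℕ} (hN : N < K) :
    DependsOn (atom f K N) (Set.Iio K) := fun _ _ h =>
  plateauPart_congr hN (fun _ hn => dependsOn_dyadicSize hf hn.le h)
    fun n hn => (hf n).mono (Set.Iio_subset_Iio hn) h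

variable [∀ n, NeZero (m n)]

lemma dyadicSize_mono (f : ℕ → G m → E) (x : G m) : Monotone fun n => dyadicSize f n x :=
  fun _ _ h => dyadicFloor_mono (predictableMax_nonneg _ _ _)
    (predictableMax_mono f x (Nat.succ_le_succ h))

lemma sum_atom (f : ℕ → G m → E) {K : ℕ} (hK : K ≠ 0) (x : G m) :
    ∑ N ∈ range K, atom f K N x = f K x :=
  sum_plateauPart (dyadicSize_mono f x) _ hK

lemma norm_atom_le (f : ℕ → G m → E) (K N : ℕ) (x : G m) :
    ‖atom f K N x‖ ≤ 4 * atomSize f N x := by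
  have hsize {k n : ℕ} (hkn : k ≤ n + 1) : ‖f k x‖ ≤ 2 * dyadicSize f n x :=
    ((norm_le_predictableMax f k x).trans (predictableMax_mono f x hkn)).trans
      (le_two_mul_dyadicFloor _)
  refine (norm_plateauPart_le (dyadicSize_mono f x) (fun n => hsize n.le_succ)
    (fun n => hsize le_rfl) K N).trans_eq ?_
  rw [atomSize]
  norm_num

lemma sum_atomSize_rpow_le (f : ℕ → G m → E) {p : ℝ} (hp : 0 < p) {K : ℕ} (hK : K ≠ 0) (x : G m) :
    ∑ N ∈ range K, atomSize f N x ^ p ≤ (1 - 2 ^ (-p))⁻¹ * predictableMax f K x ^ p := by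
  obtain ⟨n, rfl⟩ := Nat.exists_eq_succ_of_ne_zero hK
  have hq : (2 : ℝ) ^ (-p) < 1 := Real.rpow_lt_one_of_one_lt_of_neg one_lt_two (neg_neg_of_pos hp)
  refine (sum_jumpSize_rpow_le (fun _ => dyadicFloor_nonneg _) (fun k hk => ?_) hp n).trans ?_
  · exact two_mul_dyadicFloor_le_of_lt ((dyadicSize_mono f x k.le_succ).lt_of_ne hk)
  · exact mul_le_mul_of_nonneg_left (Real.rpow_le_rpow (dyadicFloor_nonneg _)
      (dyadicFloor_le_self (predictableMax_nonneg f _ x)) hp.le) (inv_nonneg.mpr (by linarith))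

lemma sum_integral_atomSize_rpow_le {μ : Measure (G m)} [IsUniform μ]
    (hf : ∀ n, DependsOn (f n) (Set.Iio n)) {B : ℕ} (hB : ∀ n, m n ≤ B) {p : ℝ} (hp : 0 < p)
    {K : ℕ} (hK : K ≠ 0) :
    ∑ N ∈ range K, ∫ x, atomSize f N x ^ p ∂μ ≤
      (1 - 2 ^ (-p))⁻¹ * (B * ∫ x, runningMax f K x ^ p ∂μ) := by
  have hq : (2 : ℝ) ^ (-p) < 1 := Real.rpow_lt_one_of_one_lt_of_neg one_lt_two (neg_neg_of_pos hp)
  have hatom (N : ℕ) : Integrable (fun x => atomSize f N x ^ p) μ :=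
    integrable_of_dependsOn (fun x y h => congrArg (· ^ p) (dependsOn_atomSize hf N h)) μ
  have hmax : Integrable (fun x => predictableMax f K x ^ p) μ :=
    integrable_of_dependsOn (fun x y h => congrArg (· ^ p) (dependsOn_predictableMax hf K h)) μ
  calc ∑ N ∈ range K, ∫ x, atomSize f N x ^ p ∂μ
      = ∫ x, ∑ N ∈ range K, atomSize f N x ^ p ∂μ :=
        (integral_finsetSum _ fun N _ => hatom N).symm
    _ ≤ ∫ x, (1 - 2 ^ (-p))⁻¹ * predictableMax f K x ^ p ∂μ :=
        integral_mono (integrable_finsetSum _ fun N _ => hatom N) (hmax.const_mul _)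
          (sum_atomSize_rpow_le f hp hK)
    _ = (1 - 2 ^ (-p))⁻¹ * ∫ x, predictableMax f K x ^ p ∂μ := integral_const_mul _ _
    _ ≤ (1 - 2 ^ (-p))⁻¹ * (B * ∫ x, runningMax f K x ^ p ∂μ) :=
        mul_le_mul_of_nonneg_left (integral_predictableMax_rpow_le hf hB hp.le K)
          (inv_nonneg.mpr (by linarith))

open scoped Classical in
lemma integral_mul_atom_eq_zero {μ : Measure (G m)} [IsFiniteMeasure μ] {f : ℕ → G m → ℂ}
    (hf : IsMartingale m μ f) (K : ℕ) {N : ℕ} (hN : N ≠ 0) {g : G m → ℂ}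
    (hg : DependsOn g (Set.Iio N)) : ∫ x, g x * atom f K N x ∂μ = 0 := by
  set c : ℕ → G m → ℂ := fun n x => g x *
    if IsJump (fun n => dyadicSize f n x) N ∧ dyadicSize f n x = dyadicSize f N x then 1 else 0
  have hc {n : ℕ} (hn : N ≤ n) : DependsOn (c n) (Set.Iio n) := by
    intro x y h
    have hsub := Set.Iio_subset_Iio hn
    have hjump : IsJump (fun n => dyadicSize f n x) N = IsJump (fun n => dyadicSize f n y) N :=
      (dependsOn_isJump_dyadicSize hf.dependsOn N).mono hsub h
    simp only [c, hjump, hg.mono hsub h, dependsOn_dyadicSize hf.dependsOn hn h,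
      dependsOn_dyadicSize hf.dependsOn le_rfl h]
  have hatom (x : G m) : g x * atom f K N x = ∑ n ∈ Ico N K, c n x * (f (n + 1) x - f n x) := by
    simp only [atom, plateauPart, c, if_neg hN, zero_add, sum_filter]
    split_ifs with h <;> simp [h, mul_sum]
  simp only [hatom]
  rw [integral_finsetSum]
  · exact sum_eq_zero fun n hn => hf.integral_mul_succ_sub (hc (mem_Ico.mp hn).1)
  · intro n hn
    have hsub := Set.Iio_subset_Iio n.le_succ
    exact integrable_of_dependsOn (n := n + 1) (fun x y h => congrArg₂ _
      ((hc (mem_Ico.mp hn).1).mono hsub h)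
      (congrArg₂ _ (hf.dependsOn (n + 1) h) ((hf.dependsOn n).mono hsub h))) μ

end Atoms

/-! ### The mass of the Cesàro kernels on cylinders -/

section KernelMass

variable {m : ℕ → ℕ} {α : ℝ} {μ : Measure (G m)} {x y : G m}

/-- The integral of `|K_n^α(x - t)|` over `t ∈ I_N(y)`. -/
def kernelMass (μ : Measure (G m)) (α : ℝ) (n N : ℕ) (y x : G m) : ℝ :=
  ∫ t in cyl m N y, ‖cesaroKernel m α n (x - t)‖ ∂μ

lemma kernelMass_nonneg (μ : Measure (G m)) (α : ℝ) (n N : ℕ) (y x : G m) :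
    0 ≤ kernelMass μ α n N y x :=
  integral_nonneg fun _ => norm_nonneg _

lemma setIntegral_norm_le_div_MM {E : Type*} [NormedAddCommGroup E] [IsUniform μ] {N : ℕ}
    {s : Set (G m)} (hs : s ⊆ cyl m N y) {g : G m → E} {C : ℝ} (hC : 0 ≤ C)
    (hg : ∀ t ∈ s, ‖g t‖ ≤ C) : ∫ t in s, ‖g t‖ ∂μ ≤ C / MM m N := by
  calc ∫ t in s, ‖g t‖ ∂μ ≤ C * μ.real s :=
        (le_abs_self _).trans (norm_setIntegral_le_of_norm_le_const (measure_lt_top μ s)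
          fun t ht => (norm_norm _).trans_le (hg t ht))
    _ ≤ C * μ.real (cyl m N y) := mul_le_mul_of_nonneg_left (measureReal_mono hs) hC
    _ = C / MM m N := by rw [measureReal_cyl, div_eq_mul_inv]

lemma sub_apply_ne_zero_of_mem_cyl {N j : ℕ} (hj : j < N) (hne : x j ≠ y j) {t : G m}
    (ht : t ∈ cyl m N y) : (x - t) j ≠ 0 := by
  rw [Pi.sub_apply, ht j hj]
  exact sub_ne_zero.mpr hne

variable [∀ n, (m n).AtLeastTwo]

lemma dependsOn_psi {n J : ℕ} (h : n < MM m J) : DependsOn (psi m n) (Set.Iio J) := by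
  intro x y hxy
  rw [psi_eq_prod_range h, psi_eq_prod_range h]
  exact prod_congr rfl fun k hk => by rw [rade, rade, hxy k (mem_range.mp hk)]

lemma dependsOn_D {n J : ℕ} (h : n ≤ MM m J) : DependsOn (D m n) (Set.Iio J) :=
  fun _ _ hxy => sum_congr rfl fun _ hk => dependsOn_psi ((mem_range.mp hk).trans_le h) hxy

lemma dependsOn_cesaroKernel {n J : ℕ} (h : n ≤ MM m J) :
    DependsOn (cesaroKernel m α n) (Set.Iio J) := by
  intro x y hxy
  simp only [cesaroKernel]
  congr 1
  exact sum_congr rfl fun k hk => by rw [dependsOn_D ((mem_Icc.mp hk).2.trans h) hxy]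

lemma integrable_cesaroKernel_sub (μ : Measure (G m)) [IsFiniteMeasure μ] (n : ℕ) (x : G m) :
    Integrable (fun t => cesaroKernel m α n (x - t)) μ :=
  integrable_of_dependsOn (dependsOn_sub (dependsOn_cesaroKernel (lt_MM n).le) x) μ

lemma kernelMass_self_le_add_succ [IsUniform μ] (hα : 0 ≤ α) (n l : ℕ) (x : G m) :
    kernelMass μ α n l x x ≤ m l + kernelMass μ α n (l + 1) x x := by
  have houter : ∀ t ∈ cyl m l x \ cyl m (l + 1) x,
      ‖cesaroKernel m α n (x - t)‖ ≤ MM m (l + 1) := by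
    refine fun t ⟨ht, ht'⟩ => norm_cesaroKernel_le_MM hα n fun hl => ht' fun j hj => ?_
    rcases Nat.lt_succ_iff_lt_or_eq.mp hj with hj | rfl
    · exact ht j hj
    · exact (sub_eq_zero.mp hl).symm
  rw [kernelMass, ← integral_inter_add_sdiff (measurableSet_cyl (l + 1) x)
    (integrable_cesaroKernel_sub μ n x).norm.integrableOn,
    Set.inter_eq_self_of_subset_right (cyl_anti l.le_succ x), add_comm]
  refine add_le_add_left ((setIntegral_norm_le_div_MM Set.sdiff_subset (Nat.cast_nonneg _)
    houter).trans_eq ?_) _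
  rw [MM_succ, Nat.cast_mul, mul_div_cancel_right₀ _ (Nat.cast_ne_zero.mpr (MM_pos l).ne')]

lemma kernelMass_self_le_mul_add [IsUniform μ] {B : ℕ} (hB : ∀ n, m n ≤ B) (hα : 0 ≤ α)
    (n s : ℕ) (x : G m) :
    kernelMass μ α n 0 x x ≤ B * s + n / MM m s := by
  have hsum : kernelMass μ α n 0 x x ≤ B * s + kernelMass μ α n s x x := by
    induction s with
    | zero => simp
    | succ s ih =>
      have hm : (m s : ℝ) ≤ B := mod_cast hB s
      have hstep := kernelMass_self_le_add_succ (μ := μ) hα n s x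
      push_cast
      linarith
  have hlast : kernelMass μ α n s x x ≤ n / MM m s :=
    setIntegral_norm_le_div_MM subset_rfl n.cast_nonneg fun t _ => norm_cesaroKernel_le hα n _
  linarith

lemma kernelMass_le_log [IsUniform μ] {B : ℕ} (hB : ∀ n, m n ≤ B) (hα : 0 ≤ α) {n : ℕ}
    (hn : n ≠ 0) (N : ℕ) (y x : G m) :
    kernelMass μ α n N y x ≤ (2 * B + 1) / Real.log 2 * Real.log (n + 1) := by
  have hlog2 : 0 < Real.log 2 := Real.log_pos one_lt_two
  have hone : (1 : ℝ) ≤ n := mod_cast Nat.one_le_iff_ne_zero.mpr hn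
  set s := Nat.log 2 n
  set r := Real.log (n + 1) / Real.log 2
  have one_le_r : 1 ≤ r := (one_le_div hlog2).mpr (Real.log_le_log two_pos (by linarith))
  have s_le_r : s ≤ r := by
    rw [le_div_iff₀ hlog2, ← Real.log_pow]
    have hpow : (2 : ℝ) ^ s ≤ n := mod_cast Nat.pow_log_le_self 2 hn
    exact Real.log_le_log (by positivity) (by linarith)
  have n_div_le : (n : ℝ) / MM m (s + 1) ≤ 1 := by
    refine div_le_one_of_le₀ ?_ (Nat.cast_nonneg _)
    exact_mod_cast (Nat.lt_pow_succ_log_self one_lt_two n).le.trans (two_pow_le_MM (s + 1))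
  calc kernelMass μ α n N y x
      ≤ kernelMass μ α n 0 y x :=
        setIntegral_mono_set (integrable_cesaroKernel_sub μ n x).norm.integrableOn
          (.of_forall fun _ => norm_nonneg _) (cyl_anti N.zero_le y).eventuallyLE
    _ = kernelMass μ α n 0 x x := by rw [kernelMass, kernelMass, cyl_zero, cyl_zero]
    _ ≤ B * (s + 1 : ℕ) + n / MM m (s + 1) := kernelMass_self_le_mul_add hB hα n (s + 1) x
    _ ≤ B * (r + r) + r := by
        push_cast
        gcongr
        exact n_div_le.trans one_le_r
    _ = (2 * B + 1) / Real.log 2 * Real.log (n + 1) := by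
        simp only [r]
        ring

lemma kernelMass_le_of_ne [IsUniform μ] (hα : 0 ≤ α) (n : ℕ) {l N : ℕ} (hlN : l < N)
    (hl : x l ≠ y l) : kernelMass μ α n N y x ≤ m l * MM m l / MM m N := by
  refine setIntegral_norm_le_div_MM subset_rfl (by positivity) fun t ht => ?_
  exact_mod_cast norm_cesaroKernel_le_MM hα n (sub_apply_ne_zero_of_mem_cyl hlN hl ht)

lemma kernelMass_le_of_ne_of_ne [IsUniform μ] (hα : 0 ≤ α) (hα' : α ≤ 1) {n l k N : ℕ}
    (hlk : l < k) (hkN : k < N) (hl : x l ≠ y l) (hk : x k ≠ y k) (hn : MM m N ≤ n) :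
    kernelMass μ α n N y x ≤
      2 * (1 + 2 * m k) * m l * (MM m l * (MM m k / MM m N) ^ α) / MM m N := by
  have hMN : (0 : ℝ) < MM m N := mod_cast MM_pos N
  have hMk : MM m k ≠ 0 := (MM_pos k).ne'
  have hMn : (MM m N : ℝ) ≤ n := mod_cast hn
  have hn0 : n ≠ 0 := ((MM_pos N).trans_le hn).ne'
  have hratio : AC α (MM m k) / AC α n ≤ 2 * (MM m k / MM m N) ^ α := by
    rw [Real.div_rpow (Nat.cast_nonneg _) hMN.le, ← mul_div_assoc]
    refine div_le_div₀ (by positivity) (AC_le_two_mul_rpow hα hα' hMk)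
      (Real.rpow_pos_of_pos hMN α) ((Real.rpow_le_rpow hMN.le ?_ hα).trans
        (rpow_le_AC hα hα' hn0))
    linarith
  refine setIntegral_norm_le_div_MM subset_rfl (by positivity) fun t ht => ?_
  calc ‖cesaroKernel m α n (x - t)‖
      ≤ (1 + 2 * m k) * MM m (l + 1) * (AC α (MM m k) / AC α n) :=
        norm_cesaroKernel_le_MM_mul_AC_div hα hα' hlk
          (sub_apply_ne_zero_of_mem_cyl (hlk.trans hkN) hl ht)
          (sub_apply_ne_zero_of_mem_cyl hkN hk ht) ((MM_mono hkN.le).trans hn)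
    _ ≤ (1 + 2 * m k) * (m l * MM m l : ℕ) * (2 * (MM m k / MM m N) ^ α) := by
        rw [← MM_succ]
        gcongr
    _ = 2 * (1 + 2 * m k) * m l * (MM m l * (MM m k / MM m N) ^ α) := by
        push_cast
        ring

end KernelMass

/-! ### A majorant of the kernel masses -/

section CylExcept

variable {m : ℕ → ℕ}

/-- The points that agree with `y` before `k`, except possibly at the coordinate `l`. -/
def cylExcept (m : ℕ → ℕ) (l k : ℕ) (y : G m) : Set (G m) := {x | ∀ j < k, j ≠ l → x j = y j}

lemma dependsOn_mem_cylExcept (l k : ℕ) (y : G m) :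
    DependsOn (· ∈ cylExcept m l k y) (Set.Iio k) :=
  fun x z h => propext (forall₂_congr fun j hj => by rw [h j hj])

lemma dependsOn_indicator_one {S : Set (G m)} {I : Set ℕ} (hS : DependsOn (· ∈ S) I) :
    DependsOn (S.indicator (1 : G m → ℝ)) I := by
  classical
  intro x z h
  have hmem : (x ∈ S) = (z ∈ S) := hS h
  simp only [Set.indicator_apply, hmem, Pi.one_apply]

lemma exists_mem_cylExcept {N : ℕ} {x y : G m} (hx : x ∉ cyl m N y) :
    ∃ l k, l < k ∧ k ≤ N ∧ x ∈ cylExcept m l k y ∧ x l ≠ y l ∧ (k < N → x k ≠ y k) := by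
  classical
  have hfirst : ∃ l, l < N ∧ x l ≠ y l := by simpa [mem_cyl] using hx
  obtain ⟨hlN, hl⟩ := Nat.find_spec hfirst
  have hbefore : ∀ j < Nat.find hfirst, x j = y j := fun j hj =>
    not_not.mp fun h => Nat.find_min hfirst hj ⟨hj.trans hlN, h⟩
  set l := Nat.find hfirst
  have hsecond : ∃ k, l < k ∧ (k < N → x k ≠ y k) := ⟨N, hlN, fun h => absurd h (lt_irrefl N)⟩
  obtain ⟨hlk, hk⟩ := Nat.find_spec hsecond
  have hkN : Nat.find hsecond ≤ N := Nat.find_min' hsecond ⟨hlN, fun h => absurd h (lt_irrefl N)⟩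
  refine ⟨l, Nat.find hsecond, hlk, hkN, fun j hj hjl => ?_, hl, hk⟩
  rcases lt_or_gt_of_ne hjl with hj' | hj'
  · exact hbefore j hj'
  · exact not_not.mp fun h => Nat.find_min hsecond hj ⟨hj', fun _ => h⟩

lemma measureReal_cylExcept_le (μ : Measure (G m)) [IsUniform μ] (l k : ℕ) [NeZero (m l)]
    (y : G m) : μ.real (cylExcept m l k y) ≤ m l / MM m k := by
  have hcover : cylExcept m l k y ⊆ ⋃ s : ZMod (m l), cyl m k (Function.update y l s) := by
    refine fun x hx => Set.mem_iUnion.mpr ⟨x l, fun j hj => ?_⟩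
    rcases eq_or_ne j l with rfl | hjl
    · rw [Function.update_self]
    · rw [Function.update_of_ne hjl, hx j hj hjl]
  calc μ.real (cylExcept m l k y)
      ≤ ∑ s : ZMod (m l), μ.real (cyl m k (Function.update y l s)) :=
        (measureReal_mono hcover).trans (measureReal_iUnion_fintype_le _)
    _ = m l / MM m k := by
        simp only [measureReal_cyl, sum_const, card_univ, ZMod.card, nsmul_eq_mul, div_eq_mul_inv]

end CylExcept

section KernelMajorant

variable {m : ℕ → ℕ} {p : ℝ}

/-- For `p = 1 / (1 + α)`, a bound (up to a constant) for the `p`-th power of the mass on `I_N(y)`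
of the kernels `K_n^α(x - ·) / log^{1+α}(n+1)`, uniform in `n ≥ M_N`. For `N = 0` the second term
is zero, since the inverse of `0` is. -/
def kernelMajorant (m : ℕ → ℕ) (p : ℝ) (N : ℕ) (y x : G m) : ℝ :=
  (cyl m N y).indicator 1 x + (N * MM m N : ℝ)⁻¹ * ∑ k ∈ range (N + 1), ∑ l ∈ range k,
    (MM m l : ℝ) ^ p * (MM m k : ℝ) ^ (1 - p) * (cylExcept m l k y).indicator 1 x

lemma indicator_one_nonneg (S : Set (G m)) (x : G m) : 0 ≤ S.indicator (1 : G m → ℝ) x :=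
  Set.indicator_nonneg (fun _ _ => zero_le_one) x

lemma kernelMajorant_summand_nonneg (m : ℕ → ℕ) (p : ℝ) (l k : ℕ) (y x : G m) :
    0 ≤ (MM m l : ℝ) ^ p * (MM m k : ℝ) ^ (1 - p) * (cylExcept m l k y).indicator 1 x :=
  mul_nonneg (by positivity) (indicator_one_nonneg _ x)

lemma one_le_kernelMajorant_of_mem_cyl (p : ℝ) {N : ℕ} {y x : G m} (hx : x ∈ cyl m N y) :
    1 ≤ kernelMajorant m p N y x := by
  rw [kernelMajorant, Set.indicator_of_mem hx]
  exact le_add_of_nonneg_right (mul_nonneg (by positivity) (sum_nonneg fun k _ =>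
    sum_nonneg fun l _ => kernelMajorant_summand_nonneg m p l k y x))

lemma le_kernelMajorant_of_mem_cylExcept (p : ℝ) {N k l : ℕ} (hk : k ≤ N) (hl : l < k)
    {y x : G m} (hx : x ∈ cylExcept m l k y) :
    (N * MM m N : ℝ)⁻¹ * ((MM m l : ℝ) ^ p * (MM m k : ℝ) ^ (1 - p)) ≤
      kernelMajorant m p N y x := by
  have hnonneg := fun k l => kernelMajorant_summand_nonneg m p l k y x
  refine le_add_of_nonneg_of_le (indicator_one_nonneg _ x)
    (mul_le_mul_of_nonneg_left ?_ (by positivity))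
  calc (MM m l : ℝ) ^ p * (MM m k : ℝ) ^ (1 - p)
      = (MM m l : ℝ) ^ p * (MM m k : ℝ) ^ (1 - p) * (cylExcept m l k y).indicator 1 x := by
        rw [Set.indicator_of_mem hx, Pi.one_apply, mul_one]
    _ ≤ ∑ l ∈ range k,
          (MM m l : ℝ) ^ p * (MM m k : ℝ) ^ (1 - p) * (cylExcept m l k y).indicator 1 x :=
        single_le_sum (f := fun l => (MM m l : ℝ) ^ p * (MM m k : ℝ) ^ (1 - p) *
          (cylExcept m l k y).indicator 1 x) (fun l _ => hnonneg k l) (mem_range.mpr hl)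
    _ ≤ _ := single_le_sum (f := fun k => ∑ l ∈ range k, (MM m l : ℝ) ^ p *
          (MM m k : ℝ) ^ (1 - p) * (cylExcept m l k y).indicator 1 x)
          (fun k _ => sum_nonneg fun l _ => hnonneg k l) (mem_range.mpr (Nat.lt_succ_of_le hk))

lemma kernelMajorant_nonneg (m : ℕ → ℕ) (p : ℝ) (N : ℕ) (y x : G m) :
    0 ≤ kernelMajorant m p N y x :=
  add_nonneg (indicator_one_nonneg _ x) (mul_nonneg (by positivity) (sum_nonneg fun k _ =>
    sum_nonneg fun l _ => kernelMajorant_summand_nonneg m p l k y x))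

lemma dependsOn_kernelMajorant (p : ℝ) (N : ℕ) (y : G m) :
    DependsOn (kernelMajorant m p N y) (Set.Iio N) := by
  intro x z hxz
  simp only [kernelMajorant]
  rw [dependsOn_indicator_one (dependsOn_mem_cyl N y) hxz]
  congr 2
  refine sum_congr rfl fun k hk => sum_congr rfl fun l _ => ?_
  have hsub : Set.Iio k ⊆ Set.Iio N := Set.Iio_subset_Iio (Nat.lt_succ_iff.mp (mem_range.mp hk))
  rw [(dependsOn_indicator_one (dependsOn_mem_cylExcept l k y)).mono hsub hxz]

variable [∀ n, (m n).AtLeastTwo]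

lemma sum_range_MM_rpow_le (hp : 0 < p) (k : ℕ) :
    ∑ l ∈ range k, (MM m l : ℝ) ^ p ≤ (2 ^ p - 1)⁻¹ * (MM m k : ℝ) ^ p := by
  have hpos : (0 : ℝ) < 2 ^ p - 1 := sub_pos.mpr (Real.one_lt_rpow one_lt_two hp)
  induction k with
  | zero => simp [hpos.le, MM]
  | succ k ih =>
    have hdouble : 2 * (MM m k : ℝ) ≤ MM m (k + 1) := by
      rw [MM_succ]
      exact_mod_cast Nat.mul_le_mul_right _ Nat.AtLeastTwo.prop
    calc ∑ l ∈ range (k + 1), (MM m l : ℝ) ^ p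
        ≤ (2 ^ p - 1)⁻¹ * (MM m k : ℝ) ^ p + (MM m k : ℝ) ^ p := by
          rw [sum_range_succ]
          gcongr
      _ = (2 ^ p - 1)⁻¹ * (2 * MM m k : ℝ) ^ p := by
          rw [Real.mul_rpow two_pos.le (Nat.cast_nonneg _)]
          field_simp
          ring
      _ ≤ (2 ^ p - 1)⁻¹ * (MM m (k + 1) : ℝ) ^ p := by gcongr

lemma sum_MM_rpow_mul_measureReal_cylExcept_le (μ : Measure (G m)) [IsUniform μ] {B : ℕ}
    (hB : ∀ n, m n ≤ B) (hp : 0 < p) (k : ℕ) (y : G m) :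
    ∑ l ∈ range k, (MM m l : ℝ) ^ p * (MM m k : ℝ) ^ (1 - p) * μ.real (cylExcept m l k y) ≤
      B * (2 ^ p - 1)⁻¹ := by
  have hMk : (0 : ℝ) < MM m k := mod_cast MM_pos k
  calc ∑ l ∈ range k, (MM m l : ℝ) ^ p * (MM m k : ℝ) ^ (1 - p) * μ.real (cylExcept m l k y)
      ≤ ∑ l ∈ range k, (MM m l : ℝ) ^ p * (MM m k : ℝ) ^ (1 - p) * (B / MM m k) := by
        gcongr with l
        exact (measureReal_cylExcept_le μ l k y).trans (by gcongr; exact hB l)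
    _ = B * (∑ l ∈ range k, (MM m l : ℝ) ^ p) / (MM m k : ℝ) ^ p := by
        rw [Real.rpow_sub hMk, Real.rpow_one, ← sum_mul, ← sum_mul]
        field_simp
    _ ≤ B * ((2 ^ p - 1)⁻¹ * (MM m k : ℝ) ^ p) / (MM m k : ℝ) ^ p := by
        gcongr
        exact sum_range_MM_rpow_le hp k
    _ = B * (2 ^ p - 1)⁻¹ := by field_simp

lemma integral_kernelMajorant (μ : Measure (G m)) [IsUniform μ] (p : ℝ) (N : ℕ) (y : G m) :
    ∫ x, kernelMajorant m p N y x ∂μ = (MM m N : ℝ)⁻¹ + (N * MM m N : ℝ)⁻¹ *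
      ∑ k ∈ range (N + 1), ∑ l ∈ range k,
        (MM m l : ℝ) ^ p * (MM m k : ℝ) ^ (1 - p) * μ.real (cylExcept m l k y) := by
  have hmeas : ∀ l k, MeasurableSet (cylExcept m l k y) := fun l k =>
    measurableSet_setOfPred.mpr (measurable_of_dependsOn (dependsOn_mem_cylExcept l k y))
  have hint : ∀ l k, Integrable (fun x => (MM m l : ℝ) ^ p * (MM m k : ℝ) ^ (1 - p) *
      (cylExcept m l k y).indicator 1 x) μ := fun l k =>
    (integrable_of_dependsOn (dependsOn_indicator_one (dependsOn_mem_cylExcept l k y)) μ).const_mul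
      _
  simp only [kernelMajorant]
  rw [integral_add
    (integrable_of_dependsOn (dependsOn_indicator_one (dependsOn_mem_cyl N y)) μ)
    ((integrable_finsetSum _ fun k _ => integrable_finsetSum _ fun l _ => hint l k).const_mul _),
    integral_indicator_one (measurableSet_cyl N y), measureReal_cyl, integral_const_mul,
    integral_finsetSum _ fun k _ => integrable_finsetSum _ fun l _ => hint l k]
  congr 2
  refine sum_congr rfl fun k _ => ?_
  rw [integral_finsetSum _ fun l _ => hint l k]
  exact sum_congr rfl fun l _ => by rw [integral_const_mul, integral_indicator_one (hmeas l k)]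

lemma integral_kernelMajorant_le (μ : Measure (G m)) [IsUniform μ] {B : ℕ} (hB : ∀ n, m n ≤ B)
    (hp : 0 < p) (N : ℕ) (y : G m) :
    ∫ x, kernelMajorant m p N y x ∂μ ≤ (1 + 2 * (B * (2 ^ p - 1)⁻¹)) / MM m N := by
  set C : ℝ := B * (2 ^ p - 1)⁻¹
  have hC : 0 ≤ C := mul_nonneg (Nat.cast_nonneg B)
    (inv_nonneg.mpr (sub_nonneg.mpr (Real.one_le_rpow one_le_two hp.le)))
  have hN : (N : ℝ)⁻¹ * (N + 1) ≤ 2 := by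
    rcases N.eq_zero_or_pos with rfl | hN
    · simp
    · have : (1 : ℝ) ≤ N := mod_cast hN
      rw [inv_mul_le_iff₀ (by linarith)]
      linarith
  rw [integral_kernelMajorant]
  calc _ ≤ (MM m N : ℝ)⁻¹ + (N * MM m N : ℝ)⁻¹ * ∑ _k ∈ range (N + 1), C := by
        gcongr with k
        exact sum_MM_rpow_mul_measureReal_cylExcept_le μ hB hp k y
    _ = (1 + (N : ℝ)⁻¹ * (N + 1) * C) / MM m N := by
        rw [sum_const, card_range, nsmul_eq_mul, mul_inv]
        push_cast
        ring
    _ ≤ (1 + 2 * C) / MM m N := by gcongr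

end KernelMajorant

section KernelBound

variable {m : ℕ → ℕ} [∀ n, (m n).AtLeastTwo] {α : ℝ} {μ : Measure (G m)} {x y : G m}

lemma exists_kernelMass_le_of_notMem_cyl [IsUniform μ] {B : ℕ} (hB : ∀ n, m n ≤ B) (hα : 0 ≤ α)
    (hα' : α ≤ 1) {n N : ℕ} (hn : MM m N ≤ n) (hx : x ∉ cyl m N y) :
    ∃ l k, l < k ∧ k ≤ N ∧ x ∈ cylExcept m l k y ∧
      kernelMass μ α n N y x ≤
        2 * (1 + 2 * B) * B * (MM m l * (MM m k / MM m N) ^ α) / MM m N := by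
  obtain ⟨l, k, hlk, hkN, hmem, hl, hk⟩ := exists_mem_cylExcept hx
  refine ⟨l, k, hlk, hkN, hmem, ?_⟩
  have hml : (m l : ℝ) ≤ B := mod_cast hB l
  rcases hkN.lt_or_eq with hkN | rfl
  · refine (kernelMass_le_of_ne_of_ne hα hα' hlk hkN hl (hk hkN) hn).trans ?_
    have hmk : (m k : ℝ) ≤ B := mod_cast hB k
    gcongr
  · refine (kernelMass_le_of_ne hα n hlk hl).trans ?_
    rw [div_self (Nat.cast_ne_zero.mpr (MM_pos k).ne'), Real.one_rpow, mul_one]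
    gcongr
    nlinarith [(Nat.cast_nonneg B : (0 : ℝ) ≤ B)]

/-- The constant in `kernelMass_div_log_rpow_le`: its first term bounds the diagonal cylinder,
the second one the others. -/
def kernelConst (B : ℕ) (α : ℝ) : ℝ :=
  ((2 * B + 1) / Real.log 2 ^ (1 + α)) ^ (1 / (1 + α)) +
    (2 * (1 + 2 * B) * B / Real.log 2 ^ (1 + α)) ^ (1 / (1 + α))

lemma kernelConst_nonneg (B : ℕ) (α : ℝ) : 0 ≤ kernelConst B α := by
  have : 0 < Real.log 2 := Real.log_pos one_lt_two
  unfold kernelConst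
  positivity

lemma kernelMass_div_log_rpow_le_of_mem_cyl [IsUniform μ] {B : ℕ} (hB : ∀ n, m n ≤ B)
    (hα : 0 ≤ α) {n : ℕ} (hn : n ≠ 0) {N : ℕ} (hx : x ∈ cyl m N y) :
    (kernelMass μ α n N y x / Real.log (n + 1) ^ (1 + α)) ^ (1 / (1 + α)) ≤
      kernelConst B α * kernelMajorant m (1 / (1 + α)) N y x := by
  have hlog2 : 0 < Real.log 2 := Real.log_pos one_lt_two
  have hone : (1 : ℝ) ≤ n := mod_cast Nat.one_le_iff_ne_zero.mpr hn
  have hlog : Real.log 2 ≤ Real.log (n + 1) := Real.log_le_log two_pos (by linarith)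
  have hlog_pos : 0 < Real.log (n + 1) := hlog2.trans_le hlog
  have hmass : kernelMass μ α n N y x / Real.log (n + 1) ^ (1 + α) ≤
      (2 * B + 1) / Real.log 2 ^ (1 + α) := by
    calc kernelMass μ α n N y x / Real.log (n + 1) ^ (1 + α)
        ≤ (2 * B + 1) / Real.log 2 * Real.log (n + 1) / Real.log (n + 1) ^ (1 + α) := by
          gcongr
          exact kernelMass_le_log hB hα hn N y x
      _ = (2 * B + 1) / (Real.log 2 * Real.log (n + 1) ^ α) := by
          rw [Real.rpow_one_add' hlog_pos.le (by positivity)]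
          field_simp
      _ ≤ (2 * B + 1) / (Real.log 2 * Real.log 2 ^ α) := by gcongr
      _ = (2 * B + 1) / Real.log 2 ^ (1 + α) := by
          rw [Real.rpow_one_add' hlog2.le (by positivity)]
  calc (kernelMass μ α n N y x / Real.log (n + 1) ^ (1 + α)) ^ (1 / (1 + α))
      ≤ ((2 * B + 1) / Real.log 2 ^ (1 + α)) ^ (1 / (1 + α)) :=
        Real.rpow_le_rpow (div_nonneg (kernelMass_nonneg ..) (by positivity)) hmass (by positivity)
    _ ≤ kernelConst B α := le_add_of_nonneg_right (by positivity)
    _ ≤ kernelConst B α * kernelMajorant m (1 / (1 + α)) N y x :=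
        le_mul_of_one_le_right (kernelConst_nonneg B α) (one_le_kernelMajorant_of_mem_cyl _ hx)

lemma exists_kernelMass_div_log_le_of_notMem_cyl [IsUniform μ] {B : ℕ} (hB : ∀ n, m n ≤ B)
    (hα : 0 ≤ α) (hα' : α ≤ 1) {n N : ℕ} (hn : MM m N ≤ n) (hx : x ∉ cyl m N y) :
    ∃ l k, l < k ∧ k ≤ N ∧ x ∈ cylExcept m l k y ∧
      kernelMass μ α n N y x / Real.log (n + 1) ^ (1 + α) ≤
        2 * (1 + 2 * B) * B / Real.log 2 ^ (1 + α) * (MM m l * (MM m k : ℝ) ^ α) /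
          (N * MM m N : ℝ) ^ (1 + α) := by
  have hlog2 : 0 < Real.log 2 := Real.log_pos one_lt_two
  have hN : (0 : ℝ) < N := by
    refine Nat.cast_pos.mpr (Nat.pos_of_ne_zero ?_)
    rintro rfl
    exact hx (by rw [cyl_zero]; trivial)
  have hMN : (0 : ℝ) < MM m N := mod_cast MM_pos N
  have hlog : N * Real.log 2 ≤ Real.log (n + 1) := by
    rw [← Real.log_pow]
    have hpow : (2 : ℝ) ^ N ≤ n := mod_cast (two_pow_le_MM N).trans hn
    exact Real.log_le_log (by positivity) (by linarith)
  obtain ⟨l, k, hlk, hkN, hmem, hle⟩ := exists_kernelMass_le_of_notMem_cyl (μ := μ) hB hα hα' hn hx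
  refine ⟨l, k, hlk, hkN, hmem, ?_⟩
  set C : ℝ := 2 * (1 + 2 * B) * B
  calc kernelMass μ α n N y x / Real.log (n + 1) ^ (1 + α)
      ≤ C * (MM m l * (MM m k / MM m N) ^ α) / MM m N / (N * Real.log 2) ^ (1 + α) := by gcongr
    _ = C / Real.log 2 ^ (1 + α) * (MM m l * (MM m k : ℝ) ^ α) / (N * MM m N : ℝ) ^ (1 + α) := by
        rw [Real.div_rpow (Nat.cast_nonneg _) hMN.le, Real.mul_rpow hN.le hlog2.le,
          Real.mul_rpow hN.le hMN.le, Real.rpow_one_add' hMN.le (by positivity)]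
        field_simp

lemma kernelMass_div_log_rpow_le_of_notMem_cyl [IsUniform μ] {B : ℕ} (hB : ∀ n, m n ≤ B)
    (hα : 0 ≤ α) (hα' : α ≤ 1) {n N : ℕ} (hn : MM m N ≤ n) (hx : x ∉ cyl m N y) :
    (kernelMass μ α n N y x / Real.log (n + 1) ^ (1 + α)) ^ (1 / (1 + α)) ≤
      kernelConst B α * kernelMajorant m (1 / (1 + α)) N y x := by
  have : 0 < Real.log 2 := Real.log_pos one_lt_two
  have hlog : 0 ≤ Real.log (n + 1) := Real.log_nonneg (by linarith [n.cast_nonneg (α := ℝ)])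
  have hα1 : 1 + α ≠ 0 := by positivity
  have hexp : α * (1 / (1 + α)) = 1 - 1 / (1 + α) := by
    field_simp
    ring
  obtain ⟨l, k, hlk, hkN, hmem, hmass⟩ :=
    exists_kernelMass_div_log_le_of_notMem_cyl (μ := μ) hB hα hα' hn hx
  set C : ℝ := 2 * (1 + 2 * B) * B
  calc (kernelMass μ α n N y x / Real.log (n + 1) ^ (1 + α)) ^ (1 / (1 + α))
      ≤ (C / Real.log 2 ^ (1 + α) * (MM m l * (MM m k : ℝ) ^ α) / (N * MM m N : ℝ) ^ (1 + α)) ^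
          (1 / (1 + α)) :=
        Real.rpow_le_rpow (div_nonneg (kernelMass_nonneg ..) (by positivity)) hmass
          (by positivity)
    _ = (C / Real.log 2 ^ (1 + α)) ^ (1 / (1 + α)) * ((N * MM m N : ℝ)⁻¹ *
          ((MM m l : ℝ) ^ (1 / (1 + α)) * (MM m k : ℝ) ^ (1 - 1 / (1 + α)))) := by
        rw [Real.div_rpow (by positivity) (by positivity), Real.mul_rpow (by positivity)
          (by positivity), Real.mul_rpow (Nat.cast_nonneg _) (by positivity),
          ← Real.rpow_mul (x := N * MM m N) (by positivity), ← Real.rpow_mul (Nat.cast_nonneg _),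
          mul_one_div_cancel hα1, Real.rpow_one, hexp]
        ring
    _ ≤ kernelConst B α * kernelMajorant m (1 / (1 + α)) N y x :=
        mul_le_mul (le_add_of_nonneg_left (by positivity))
          (le_kernelMajorant_of_mem_cylExcept _ hkN hlk hmem) (by positivity)
          (kernelConst_nonneg B α)

lemma kernelMass_div_log_rpow_le [IsUniform μ] {B : ℕ} (hB : ∀ n, m n ≤ B) (hα : 0 ≤ α)
    (hα' : α ≤ 1) {n N : ℕ} (hn : MM m N ≤ n) (y x : G m) :
    (kernelMass μ α n N y x / Real.log (n + 1) ^ (1 + α)) ^ (1 / (1 + α)) ≤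
      kernelConst B α * kernelMajorant m (1 / (1 + α)) N y x := by
  by_cases hx : x ∈ cyl m N y
  · exact kernelMass_div_log_rpow_le_of_mem_cyl hB hα ((MM_pos N).trans_le hn).ne' hx
  · exact kernelMass_div_log_rpow_le_of_notMem_cyl hB hα hα' hn hx

end KernelBound

/-! ### Cesàro means as convolutions -/

section Convolution

variable {m : ℕ → ℕ} [∀ n, (m n).AtLeastTwo] {μ : Measure (G m)} [IsFiniteMeasure μ]
  {f : ℕ → G m → ℂ}

lemma mcoef_eq_integral (hf : IsMartingale m μ f) {i K : ℕ} (hi : i < MM m K) :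
    mcoef m μ f i = ∫ x, f K x * (starRingEnd ℂ) (psi m i x) ∂μ := by
  have hconj : DependsOn (fun x => (starRingEnd ℂ) (psi m i x)) (Set.Iio K) :=
    fun x y hxy => congrArg _ (dependsOn_psi hi hxy)
  have hconst : ∀ k, K ≤ k → ∫ x, f K x * (starRingEnd ℂ) (psi m i x) ∂μ =
      ∫ x, f k x * (starRingEnd ℂ) (psi m i x) ∂μ := by
    intro k hk
    induction k, hk using Nat.le_induction with
    | base => rfl
    | succ k hk ih =>
      have hint : ∀ j, K ≤ j → Integrable (fun x => f j x * (starRingEnd ℂ) (psi m i x)) μ :=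
        fun j hj => integrable_of_dependsOn
          (dependsOn_mul (hf.dependsOn j) (hconj.mono (Set.Iio_subset_Iio hj))) μ
      rw [ih, eq_comm, ← sub_eq_zero, ← integral_sub (hint _ (hk.trans k.le_succ)) (hint k hk),
        ← hf.integral_mul_succ_sub (hconj.mono (Set.Iio_subset_Iio hk))]
      exact integral_congr_ae (.of_forall fun x => by ring)
  refine Tendsto.limUnder_eq (tendsto_const_nhds.congr' ?_)
  filter_upwards [eventually_ge_atTop K] with k hk using hconst k hk

lemma mS_eq_integral (hf : IsMartingale m μ f) {n K : ℕ} (hn : n ≤ MM m K) (x : G m) :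
    mS m μ f n x = ∫ t, D m n (x - t) * f K t ∂μ := by
  have hi : ∀ i ∈ range n, i < MM m K := fun i hi => (mem_range.mp hi).trans_le hn
  simp only [D, sum_mul]
  rw [integral_finsetSum _ fun i h => integrable_of_dependsOn
    (dependsOn_mul (dependsOn_sub (dependsOn_psi (hi i h)) x) (hf.dependsOn K)) μ]
  refine sum_congr rfl fun i h => ?_
  rw [mcoef_eq_integral hf (hi i h), ← integral_mul_const]
  refine integral_congr_ae (.of_forall fun t => ?_)
  simp only [psi_sub]
  ring

lemma mCes_eq_integral (hf : IsMartingale m μ f) (α : ℝ) {n K : ℕ} (hn : n ≤ MM m K) (x : G m) :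
    mCes m α μ f n x = ∫ t, cesaroKernel m α n (x - t) * f K t ∂μ := by
  have hk : ∀ k ∈ Icc 1 n, k ≤ MM m K := fun k hk => (mem_Icc.mp hk).2.trans hn
  simp only [cesaroKernel, mul_assoc, sum_mul]
  rw [mCes, integral_const_mul, integral_finsetSum _ fun k h => (integrable_of_dependsOn
    (dependsOn_mul (dependsOn_sub (dependsOn_D (hk k h)) x) (hf.dependsOn K)) μ).const_mul _]
  congr 1
  exact sum_congr rfl fun k h => by rw [mS_eq_integral hf (hk k h), integral_const_mul]

lemma norm_integral_cesaroKernel_mul_atom_le (hf : ∀ n, DependsOn (f n) (Set.Iio n)) (α : ℝ)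
    (n : ℕ) {N K : ℕ} (hN : N < K) (x : G m) :
    ‖∫ t, cesaroKernel m α n (x - t) * atom f K N t ∂μ‖ ≤
      ∑ y ∈ cylReps m N, 4 * atomSize f N y * kernelMass μ α n N y x := by
  have hint : Integrable (fun t => cesaroKernel m α n (x - t) * atom f K N t) μ :=
    integrable_of_dependsOn (n := max n K) (dependsOn_mul
      ((dependsOn_sub (dependsOn_cesaroKernel (lt_MM n).le) x).mono
        (Set.Iio_subset_Iio (le_max_left n K)))
      ((dependsOn_atom hf hN).mono (Set.Iio_subset_Iio (le_max_right n K)))) μ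
  rw [integral_eq_sum_setIntegral_cyl N hint]
  refine (norm_sum_le _ _).trans (sum_le_sum fun y _ => ?_)
  rw [kernelMass, ← integral_const_mul]
  refine (norm_integral_le_integral_norm _).trans (setIntegral_mono_on hint.norm.integrableOn
    ((integrable_cesaroKernel_sub μ n x).norm.const_mul _).integrableOn (measurableSet_cyl N y)
    fun t ht => ?_)
  rw [norm_mul, mul_comm, ← dependsOn_atomSize hf N ht]
  exact mul_le_mul_of_nonneg_right (norm_atom_le f K N t) (norm_nonneg _)

end Convolution

/-! ### The maximal inequality -/

lemma sum_rpow_le_sum_rpow {ι : Type*} {s : Finset ι} {g : ι → ℝ} (hg : ∀ i ∈ s, 0 ≤ g i)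
    {p : ℝ} (hp : 0 < p) (hp' : p ≤ 1) : (∑ i ∈ s, g i) ^ p ≤ ∑ i ∈ s, g i ^ p :=
  le_sum_of_subadditive_on_pred (· ^ p) (0 ≤ ·) (Real.zero_rpow hp.ne').le
    (fun _ _ hx hy => Real.rpow_add_le_add_rpow hx hy hp.le hp') (fun _ _ => add_nonneg) g hg

section LevelMajorant

variable {m : ℕ → ℕ} {p : ℝ} {f : ℕ → G m → ℂ}

lemma ofReal_runningMax_le_iSup (f : ℕ → G m → ℂ) (n : ℕ) (x : G m) :
    ENNReal.ofReal (runningMax f n x) ≤ ⨆ k, (‖f k x‖₊ : ℝ≥0∞) := by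
  have hterm (k : ℕ) : ENNReal.ofReal ‖f k x‖ ≤ ⨆ k, (‖f k x‖₊ : ℝ≥0∞) :=
    (ofReal_norm _).trans_le (le_iSup (fun k => (‖f k x‖₊ : ℝ≥0∞)) k)
  induction n with
  | zero => simpa only [runningMax, partialSups_zero] using hterm 0
  | succ n ih =>
    rw [runningMax_succ, ENNReal.ofReal_max]
    exact max_le ih (hterm _)

/-- A bound (up to a constant), uniform in `n`, for the contribution of the `N`-th atom to the
`p`-th power of `|σ_n^α f| / log^{1+α}(n+1)`, where `p = 1 / (1 + α)`. -/
def levelMajorant [∀ n, NeZero (m n)] (p : ℝ) (f : ℕ → G m → ℂ) (N : ℕ) (x : G m) : ℝ :=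
  ∑ y ∈ cylReps m N, atomSize f N y ^ p * kernelMajorant m p N y x

section

variable [∀ n, NeZero (m n)]

lemma levelMajorant_nonneg (p : ℝ) (f : ℕ → G m → ℂ) (N : ℕ) (x : G m) :
    0 ≤ levelMajorant p f N x :=
  sum_nonneg fun y _ => mul_nonneg (Real.rpow_nonneg (atomSize_nonneg f N y) _)
    (kernelMajorant_nonneg m p N y x)

lemma dependsOn_levelMajorant (p : ℝ) (f : ℕ → G m → ℂ) (N : ℕ) :
    DependsOn (levelMajorant p f N) (Set.Iio N) :=
  fun x z hxz => sum_congr rfl fun y _ => by rw [dependsOn_kernelMajorant p N y hxz]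

end

variable [∀ n, (m n).AtLeastTwo] {μ : Measure (G m)} [IsUniform μ] {B : ℕ}

lemma integral_levelMajorant_le (hf : ∀ n, DependsOn (f n) (Set.Iio n)) (hB : ∀ n, m n ≤ B)
    (hp : 0 < p) (N : ℕ) :
    ∫ x, levelMajorant p f N x ∂μ ≤
      (1 + 2 * (B * (2 ^ p - 1)⁻¹)) * ∫ x, atomSize f N x ^ p ∂μ := by
  simp only [levelMajorant]
  rw [integral_finsetSum _ fun y _ =>
      (integrable_of_dependsOn (dependsOn_kernelMajorant p N y) μ).const_mul _,
    integral_eq_sum_div_MM fun x y h => congrArg (· ^ p) (dependsOn_atomSize hf N h), sum_div,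
    mul_sum]
  refine sum_le_sum fun y _ => ?_
  rw [integral_const_mul, mul_div_left_comm]
  exact mul_le_mul_of_nonneg_left (integral_kernelMajorant_le μ hB hp N y)
    (Real.rpow_nonneg (atomSize_nonneg f N y) _)

/-- The constant in `lintegral_tsum_levelMajorant_le`: the factor of `integral_levelMajorant_le`
times that of `sum_integral_atomSize_rpow_le`. -/
def levelConst (B : ℕ) (p : ℝ) : ℝ := (1 + 2 * (B * (2 ^ p - 1)⁻¹)) * ((1 - 2 ^ (-p))⁻¹ * B)

lemma levelConst_nonneg (B : ℕ) (hp : 0 ≤ p) : 0 ≤ levelConst B p := by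
  have h1 : (0 : ℝ) ≤ 2 ^ p - 1 := sub_nonneg.mpr (Real.one_le_rpow one_le_two hp)
  have h2 : (0 : ℝ) ≤ 1 - 2 ^ (-p) :=
    sub_nonneg.mpr (Real.rpow_le_one_of_one_le_of_nonpos one_le_two (neg_nonpos.mpr hp))
  unfold levelConst
  positivity

lemma sum_integral_levelMajorant_le (hf : ∀ n, DependsOn (f n) (Set.Iio n))
    (hB : ∀ n, m n ≤ B) (hp : 0 < p) {K : ℕ} (hK : K ≠ 0) :
    ∑ N ∈ range K, ∫ x, levelMajorant p f N x ∂μ ≤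
      levelConst B p * ∫ x, runningMax f K x ^ p ∂μ := by
  have hpos : (0 : ℝ) ≤ 2 ^ p - 1 := sub_nonneg.mpr (Real.one_le_rpow one_le_two hp.le)
  calc ∑ N ∈ range K, ∫ x, levelMajorant p f N x ∂μ
      ≤ (1 + 2 * (B * (2 ^ p - 1)⁻¹)) * ∑ N ∈ range K, ∫ x, atomSize f N x ^ p ∂μ := by
        rw [mul_sum]
        exact sum_le_sum fun N _ => integral_levelMajorant_le hf hB hp N
    _ ≤ (1 + 2 * (B * (2 ^ p - 1)⁻¹)) *
          ((1 - 2 ^ (-p))⁻¹ * (B * ∫ x, runningMax f K x ^ p ∂μ)) :=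
        mul_le_mul_of_nonneg_left (sum_integral_atomSize_rpow_le hf hB hp hK) (by positivity)
    _ = levelConst B p * ∫ x, runningMax f K x ^ p ∂μ := by
        rw [levelConst]
        ring

lemma lintegral_tsum_levelMajorant_le (hf : ∀ n, DependsOn (f n) (Set.Iio n))
    (hB : ∀ n, m n ≤ B) (hp : 0 < p) :
    ∫⁻ x, ∑' N, ENNReal.ofReal (levelMajorant p f N x) ∂μ ≤
      ENNReal.ofReal (levelConst B p) * ∫⁻ x, (⨆ n, (‖f n x‖₊ : ℝ≥0∞)) ^ p ∂μ := by
  have hint (N : ℕ) : Integrable (levelMajorant p f N) μ :=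
    integrable_of_dependsOn (dependsOn_levelMajorant p f N) μ
  have hmax (K : ℕ) : Integrable (fun x => runningMax f K x ^ p) μ :=
    integrable_of_dependsOn (fun x y h => congrArg (· ^ p) (dependsOn_runningMax hf K h)) μ
  rw [lintegral_tsum fun N => (hint N).aemeasurable.ennreal_ofReal,
    ENNReal.tsum_eq_iSup_nat' (tendsto_add_atTop_nat 1)]
  refine iSup_le fun K => ?_
  calc ∑ N ∈ range (K + 1), ∫⁻ x, ENNReal.ofReal (levelMajorant p f N x) ∂μ
      = ENNReal.ofReal (∑ N ∈ range (K + 1), ∫ x, levelMajorant p f N x ∂μ) := by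
        rw [ENNReal.ofReal_sum_of_nonneg fun N _ => integral_nonneg (levelMajorant_nonneg p f N)]
        exact sum_congr rfl fun N _ => (ofReal_integral_eq_lintegral_ofReal (hint N)
          (.of_forall (levelMajorant_nonneg p f N))).symm
    _ ≤ ENNReal.ofReal (levelConst B p * ∫ x, runningMax f (K + 1) x ^ p ∂μ) :=
        ENNReal.ofReal_le_ofReal (sum_integral_levelMajorant_le hf hB hp K.succ_ne_zero)
    _ = ENNReal.ofReal (levelConst B p) * ∫⁻ x, ENNReal.ofReal (runningMax f (K + 1) x) ^ p ∂μ := by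
        rw [ENNReal.ofReal_mul (levelConst_nonneg B hp.le), ofReal_integral_eq_lintegral_ofReal
          (hmax _) (.of_forall fun x => Real.rpow_nonneg (runningMax_nonneg f _ x) p)]
        simp only [ENNReal.ofReal_rpow_of_nonneg (runningMax_nonneg f _ _) hp.le]
    _ ≤ ENNReal.ofReal (levelConst B p) * ∫⁻ x, (⨆ n, (‖f n x‖₊ : ℝ≥0∞)) ^ p ∂μ := by
        gcongr with x
        exact ofReal_runningMax_le_iSup f _ x

end LevelMajorant

section Cesaro

variable {m : ℕ → ℕ} [∀ n, (m n).AtLeastTwo] {α : ℝ} {μ : Measure (G m)} [IsUniform μ] {B : ℕ}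
  {f : ℕ → G m → ℂ}

lemma norm_integral_cesaroKernel_mul_atom_div_log_rpow_le (hf : ∀ n, DependsOn (f n) (Set.Iio n))
    (hB : ∀ n, m n ≤ B) (hα : 0 ≤ α) (hα' : α ≤ 1) {n N K : ℕ} (hn : MM m N ≤ n) (hN : N < K)
    (x : G m) :
    (‖∫ t, cesaroKernel m α n (x - t) * atom f K N t ∂μ‖ / Real.log (n + 1) ^ (1 + α)) ^
        (1 / (1 + α)) ≤
      4 ^ (1 / (1 + α)) * kernelConst B α * levelMajorant (1 / (1 + α)) f N x := by
  set L := Real.log (n + 1) ^ (1 + α)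
  set p := 1 / (1 + α)
  have hL : 0 ≤ L := Real.rpow_nonneg (Real.log_nonneg (by linarith [n.cast_nonneg (α := ℝ)])) _
  have hp : 0 < p := by positivity
  have hp' : p ≤ 1 := div_le_one_of_le₀ (by linarith) (by positivity)
  have hsize (y : G m) : 0 ≤ 4 * atomSize f N y := mul_nonneg four_pos.le (atomSize_nonneg f N y)
  have hmass (y : G m) : 0 ≤ kernelMass μ α n N y x / L := div_nonneg (kernelMass_nonneg ..) hL
  calc (‖∫ t, cesaroKernel m α n (x - t) * atom f K N t ∂μ‖ / L) ^ p
      ≤ (∑ y ∈ cylReps m N, 4 * atomSize f N y * (kernelMass μ α n N y x / L)) ^ p := by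
        refine Real.rpow_le_rpow (by positivity) ?_ hp.le
        simp only [← mul_div_assoc, ← sum_div]
        gcongr
        exact norm_integral_cesaroKernel_mul_atom_le hf α n hN x
    _ ≤ ∑ y ∈ cylReps m N, (4 * atomSize f N y * (kernelMass μ α n N y x / L)) ^ p :=
        sum_rpow_le_sum_rpow (fun y _ => mul_nonneg (hsize y) (hmass y)) hp hp'
    _ ≤ ∑ y ∈ cylReps m N, (4 * atomSize f N y) ^ p *
          (kernelConst B α * kernelMajorant m p N y x) := by
        gcongr with y
        rw [Real.mul_rpow (hsize y) (hmass y)]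
        exact mul_le_mul_of_nonneg_left (kernelMass_div_log_rpow_le hB hα hα' hn y x)
          (Real.rpow_nonneg (hsize y) p)
    _ = 4 ^ p * kernelConst B α * levelMajorant p f N x := by
        rw [levelMajorant, mul_sum]
        refine sum_congr rfl fun y _ => ?_
        rw [Real.mul_rpow four_pos.le (atomSize_nonneg f N y)]
        ring

lemma integral_cesaroKernel_mul_atom_eq_zero (hf : IsMartingale m μ f) {n N : ℕ} (hN : N ≠ 0)
    (hn : n ≤ MM m N) (K : ℕ) (x : G m) :
    ∫ t, cesaroKernel m α n (x - t) * atom f K N t ∂μ = 0 :=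
  integral_mul_atom_eq_zero hf K hN (dependsOn_sub (dependsOn_cesaroKernel hn) x)

lemma mCes_eq_sum_integral_atom (hf : IsMartingale m μ f) (α : ℝ) {n : ℕ} (hn : n ≠ 0)
    (x : G m) :
    mCes m α μ f n x = ∑ N ∈ range n, ∫ t, cesaroKernel m α n (x - t) * atom f n N t ∂μ := by
  have hkernel := dependsOn_sub (dependsOn_cesaroKernel (α := α) (lt_MM n).le) x
  rw [mCes_eq_integral hf α (lt_MM n).le, ← integral_finsetSum _ fun N hN =>
    integrable_of_dependsOn
      (dependsOn_mul hkernel (dependsOn_atom hf.dependsOn (mem_range.mp hN))) μ]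
  simp only [← mul_sum, sum_atom f hn]

lemma norm_mCes_div_log_rpow_le (hf : IsMartingale m μ f) (hB : ∀ n, m n ≤ B) (hα : 0 ≤ α)
    (hα' : α ≤ 1) {n : ℕ} (hn : n ≠ 0) (x : G m) :
    (‖mCes m α μ f n x‖ / Real.log (n + 1) ^ (1 + α)) ^ (1 / (1 + α)) ≤
      4 ^ (1 / (1 + α)) * kernelConst B α *
        ∑ N ∈ range n, levelMajorant (1 / (1 + α)) f N x := by
  set L := Real.log (n + 1) ^ (1 + α)
  set p := 1 / (1 + α)
  have hL : 0 ≤ L := Real.rpow_nonneg (Real.log_nonneg (by linarith [n.cast_nonneg (α := ℝ)])) _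
  have hp : 0 < p := by positivity
  have hp' : p ≤ 1 := div_le_one_of_le₀ (by linarith) (by positivity)
  calc (‖mCes m α μ f n x‖ / L) ^ p
      ≤ (∑ N ∈ range n, ‖∫ t, cesaroKernel m α n (x - t) * atom f n N t ∂μ‖ / L) ^ p := by
        rw [mCes_eq_sum_integral_atom hf α hn, ← sum_div]
        gcongr
        exact norm_sum_le _ _
    _ ≤ ∑ N ∈ range n, (‖∫ t, cesaroKernel m α n (x - t) * atom f n N t ∂μ‖ / L) ^ p :=
        sum_rpow_le_sum_rpow (fun N _ => by positivity) hp hp'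
    _ ≤ 4 ^ p * kernelConst B α * ∑ N ∈ range n, levelMajorant p f N x := by
        rw [mul_sum]
        refine sum_le_sum fun N hN => ?_
        by_cases hMn : MM m N ≤ n
        · exact norm_integral_cesaroKernel_mul_atom_div_log_rpow_le hf.dependsOn hB hα hα' hMn
            (mem_range.mp hN) x
        · have hN0 : N ≠ 0 := by
            rintro rfl
            exact hMn (Nat.one_le_iff_ne_zero.mpr hn)
          rw [integral_cesaroKernel_mul_atom_eq_zero hf hN0 (not_le.mp hMn).le, norm_zero,
            zero_div, Real.zero_rpow hp.ne']
          exact mul_nonneg (mul_nonneg (by positivity) (kernelConst_nonneg B α))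
            (levelMajorant_nonneg p f N x)

lemma iSup_nnnorm_mCes_div_log_rpow_le (hf : IsMartingale m μ f) (hB : ∀ n, m n ≤ B)
    (hα : 0 ≤ α) (hα' : α ≤ 1) (x : G m) :
    (⨆ n : ℕ, (‖mCes m α μ f n x‖₊ : ℝ≥0∞) / ENNReal.ofReal (Real.log (n + 1) ^ (1 + α))) ^
        (1 / (1 + α)) ≤
      ENNReal.ofReal (4 ^ (1 / (1 + α)) * kernelConst B α) *
        ∑' N, ENNReal.ofReal (levelMajorant (1 / (1 + α)) f N x) := by
  have hp : 0 < 1 / (1 + α) := by positivity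
  have hC : 0 ≤ 4 ^ (1 / (1 + α)) * kernelConst B α :=
    mul_nonneg (by positivity) (kernelConst_nonneg B α)
  rw [← ENNReal.le_rpow_inv_iff hp]
  refine iSup_le fun n => (ENNReal.le_rpow_inv_iff hp).mpr ?_
  rcases eq_or_ne n 0 with rfl | hn
  · have hzero : mCes m α μ f 0 x = 0 := by simp [mCes]
    rw [hzero, nnnorm_zero, ENNReal.coe_zero, ENNReal.zero_div, ENNReal.zero_rpow_of_pos hp]
    exact zero_le
  have hlog : 0 < Real.log (n + 1) :=
    Real.log_pos (lt_add_of_pos_left 1 (Nat.cast_pos.mpr (Nat.pos_of_ne_zero hn)))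
  rw [← enorm_eq_nnnorm, ← ofReal_norm, ← ENNReal.ofReal_div_of_pos (Real.rpow_pos_of_pos hlog _),
    ENNReal.ofReal_rpow_of_nonneg (by positivity) hp.le]
  refine (ENNReal.ofReal_le_ofReal (norm_mCes_div_log_rpow_le hf hB hα hα' hn x)).trans ?_
  rw [ENNReal.ofReal_mul hC, ENNReal.ofReal_sum_of_nonneg fun N _ => levelMajorant_nonneg _ f N x]
  gcongr
  exact ENNReal.sum_le_tsum _

lemma lintegral_iSup_mCes_div_log_rpow_le (hf : IsMartingale m μ f) (hB : ∀ n, m n ≤ B)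
    (hα : 0 ≤ α) (hα' : α ≤ 1) :
    ∫⁻ x, (⨆ n : ℕ, (‖mCes m α μ f n x‖₊ : ℝ≥0∞) /
        ENNReal.ofReal (Real.log (n + 1) ^ (1 + α))) ^ (1 / (1 + α)) ∂μ ≤
      ENNReal.ofReal (4 ^ (1 / (1 + α)) * kernelConst B α) *
        (ENNReal.ofReal (levelConst B (1 / (1 + α))) *
          ∫⁻ x, (⨆ n, (‖f n x‖₊ : ℝ≥0∞)) ^ (1 / (1 + α)) ∂μ) := by
  refine (lintegral_mono (iSup_nnnorm_mCes_div_log_rpow_le hf hB hα hα')).trans ?_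
  rw [lintegral_const_mul' _ _ ENNReal.ofReal_ne_top]
  gcongr
  exact lintegral_tsum_levelMajorant_le hf.dependsOn hB (by positivity)

end Cesaro

theorem statement2_general (B : ℕ) (α : ℝ) (hα0 : 0 < α) (hα1 : α ≤ 1) :
    ∃ c : ℝ≥0, ∀ m : ℕ → ℕ, (∀ n, 2 ≤ m n) → (∀ n, m n ≤ B) → ∀ μ : Measure (G m),
      (∀ (n : ℕ) (x : G m), μ (cyl m n x) = ((MM m n : ℝ≥0∞))⁻¹) →
      ∀ f : ℕ → G m → ℂ, IsMartingale m μ f →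
      lpNormE m μ (1 / (1 + α))
          (fun x => ⨆ n : ℕ, (‖mCes m α μ f n x‖₊ : ℝ≥0∞) /
            ENNReal.ofReal (Real.log (n + 1) ^ (1 + α))) ≤
        (c : ℝ≥0∞) * HpNorm m μ (1 / (1 + α)) f := by
  set p := 1 / (1 + α)
  set C : ℝ≥0 := (4 ^ p * kernelConst B α).toNNReal * (levelConst B p).toNNReal
  refine ⟨C ^ (1 / p), fun m hm hB μ hμ f hf => ?_⟩
  have : ∀ n, (m n).AtLeastTwo := fun n => ⟨hm n⟩
  have : IsUniform μ := ⟨hμ⟩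
  have hp : 0 ≤ 1 / p := by positivity
  rw [HpNorm, lpNormE, lpNormE, ENNReal.coe_rpow_of_nonneg C hp,
    ← ENNReal.mul_rpow_of_nonneg _ _ hp, ENNReal.coe_mul, mul_assoc]
  exact ENNReal.rpow_le_rpow (lintegral_iSup_mCes_div_log_rpow_le hf hB hα0.le hα1) hp

/-- Let `0 < α < 1`. Then there is a constant `c_α` such that for every
martingale `f ∈ H_{1/(1+α)}(G_m)`,
`‖ sup_n |σ_n^α f| / log^{1+α}(n+1) ‖_{1/(1+α)} ≤ c_α ‖f‖_{H_{1/(1+α)}}`, where `σ_n^α` is the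
`n`-th `(C,α)` Cesàro mean of the Vilenkin-Fourier series. -/
theorem statement2
    (m : ℕ → ℕ) (hm : ∀ n, 2 ≤ m n) (hmb : ∃ B, ∀ n, m n ≤ B)
    (μ : Measure (G m)) [IsProbabilityMeasure μ]
    (hμ : ∀ (n : ℕ) (x : G m), μ (cyl m n x) = ((MM m n : ℝ≥0∞))⁻¹)
    (α : ℝ) (hα0 : 0 < α) (hα1 : α < 1) :
    ∃ c : ℝ≥0, ∀ f : ℕ → G m → ℂ, IsMartingale m μ f →
      HpNorm m μ (1 / (1 + α)) f < ⊤ →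
      lpNormE m μ (1 / (1 + α))
          (fun x => ⨆ n : ℕ, (‖mCes m α μ f n x‖₊ : ℝ≥0∞) /
            ENNReal.ofReal (Real.log (n + 1) ^ (1 + α))) ≤
        (c : ℝ≥0∞) * HpNorm m μ (1 / (1 + α)) f := by
  obtain ⟨B, hB⟩ := hmb
  obtain ⟨c, hc⟩ := statement2_general B α hα0 hα1.le
  exact ⟨c, fun f hf _ => hc m hm hB μ hμ f hf⟩

end Vilenkin
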